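/- arXiv:0902.3831 — 2 statements merged into one kernel-verified Lean document; each statement's English description precedes it below -/
import Mathlib

section
/- Let X be a complete metric space, x₀ ∈ X, and suppose that for each s ∈ B a 1-Lipschitz map φ_s : [τ(s), τ(s + ⟨1⟩)] → X is given with φ_s(τ(s)) = φ_s(τ(s + ⟨1⟩)) = x₀. Then there exists a unique 1-Lipschitz map φ : [0,1] → X whose restriction to [τ(s), τ(s + ⟨1⟩)] equals φ_s for every s ∈ B. -/
/-!
The relation `⪯` is the lexicographic linear order, and `s + ⟨1⟩` is the immediate successor of `s`.
Hence `τ (s + ⟨1⟩) = τ s + λ (ℓ s)` for `s ∈ B` (`tau_append_one`), and `τ (s + ⟨1⟩) ≤ τ t` whenever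
`s ≺ t` (`tau_append_one_le`). So the intervals `[τ s, τ (s + ⟨1⟩)]`, `s ∈ B`, are non-overlapping
subintervals of `[0, 1]`. As there are `n!` elements of `B` of length `n`, the lengths of these
intervals add up to `∑_{n ≥ 1} 2⁻ⁿ = 1` (`hasSum_weight`). Their union therefore has full measure in
`[0, 1]`, and in particular it is dense (`dense_iUnion_Icc_tau`).

Given `x ≤ y` in the intervals of `s ≺ t`, the path from `φ_s x` to `φ_t y` can be routed through
`x₀`, the value at the right end of the first interval and the left end of the second, which gives
`dist (φ_s x) (φ_t y) ≤ y - x` (`dist_le_of_mem_Icc_tau`). Thus the maps `φ_s` glue to a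
`1`-Lipschitz map on the union; since `X` is complete it extends uniquely to the closure `[0, 1]`.
-/

/-- The `j`-th entry (1-indexed) of a finite sequence of positive naturals,
viewed as a natural number. Only used for `1 ≤ j ≤ s.length`. -/
def nthSeq (s : List ℕ+) (j : ℕ) : ℕ := ↑(s.getD (j - 1) 1)

/-- The linear order `⪯` on finite sequences of positive natural numbers:
`s ⪯ t` iff either (a) there is an index `j ≤ min (ℓ s) (ℓ t)` which is the first index where
`s` and `t` differ, and there `s j < t j`, or (b) `ℓ s ≤ ℓ t` and `t` extends `s`. -/
def sle (s t : List ℕ+) : Prop :=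
  (∃ j, 1 ≤ j ∧ j ≤ min s.length t.length ∧
     (∀ i, 1 ≤ i → i < j → nthSeq s i = nthSeq t i) ∧ nthSeq s j < nthSeq t j) ∨
  (s.length ≤ t.length ∧ ∀ j, 1 ≤ j → j ≤ s.length → nthSeq s j = nthSeq t j)

/-- The strict version `≺` of the order `⪯`. -/
def slt (s t : List ℕ+) : Prop := sle s t ∧ s ≠ t

/-- The set `B` of nonempty sequences `s` with `s i ≤ i` for all `1 ≤ i ≤ ℓ s`. -/
def BSet : Set (List ℕ+) := {s | 1 ≤ s.length ∧ ∀ i, 1 ≤ i → i ≤ s.length → nthSeq s i ≤ i}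

/-- `λ n = 1 / (2^n n!)`. -/
noncomputable def lam (n : ℕ) : ℝ := 1 / ((2 : ℝ) ^ n * (n.factorial : ℝ))

/-- `τ s = Σ_{t ∈ B, t ≺ s} λ (ℓ t)`. -/
noncomputable def tau (s : List ℕ+) : ℝ :=
  ∑' t : {t : List ℕ+ // t ∈ BSet ∧ slt t s}, lam t.1.length

/-! ### The lexicographic order -/

theorem nthSeq_cons_succ (a : ℕ+) (s : List ℕ+) (j : ℕ) (hj : 1 ≤ j) :
    nthSeq (a :: s) (j + 1) = nthSeq s j := by
  obtain ⟨j, rfl⟩ : ∃ i, j = i + 1 := ⟨j - 1, by omega⟩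
  simp [nthSeq]

theorem nthSeq_cons_one (a : ℕ+) (s : List ℕ+) : nthSeq (a :: s) 1 = a := by
  simp [nthSeq]

theorem nil_sle (t : List ℕ+) : sle [] t :=
  Or.inr ⟨by simp, fun j h1 h2 => by simp at h2; omega⟩

theorem not_cons_sle_nil (a : ℕ+) (s : List ℕ+) : ¬ sle (a :: s) [] := by
  rintro (⟨j, h1, h2, -⟩ | ⟨h, -⟩)
  · simp at h2; omega
  · simp at h

theorem cons_sle_cons (a b : ℕ+) (s t : List ℕ+) :
    sle (a :: s) (b :: t) ↔ a < b ∨ a = b ∧ sle s t := by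
  constructor
  · rintro (⟨j, h1, h2, h3, h4⟩ | ⟨h1, h2⟩)
    · obtain rfl | ⟨i, hi, rfl⟩ : j = 1 ∨ ∃ i, 1 ≤ i ∧ j = i + 1 := by
        by_cases h : j = 1
        · exact Or.inl h
        · exact Or.inr ⟨j - 1, by omega, by omega⟩
      · left
        simpa [nthSeq_cons_one] using h4
      · right
        have hab := h3 1 le_rfl (by omega)
        rw [nthSeq_cons_one, nthSeq_cons_one] at hab
        refine ⟨PNat.eq hab, Or.inl ⟨i, hi, ?_, ?_, ?_⟩⟩
        · simp at h2 ⊢; omega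
        · intro k hk hki
          simpa [nthSeq_cons_succ _ _ k hk] using h3 (k + 1) (by omega) (by omega)
        · simpa [nthSeq_cons_succ _ _ i hi] using h4
    · right
      have hab := h2 1 le_rfl (by simp)
      rw [nthSeq_cons_one, nthSeq_cons_one] at hab
      refine ⟨PNat.eq hab, Or.inr ⟨by simpa using h1, fun k hk hks => ?_⟩⟩
      simpa [nthSeq_cons_succ _ _ k hk] using h2 (k + 1) (by omega) (by simpa using hks)
  · rintro (h | ⟨rfl, ⟨j, h1, h2, h3, h4⟩ | ⟨h1, h2⟩⟩)
    · exact Or.inl ⟨1, le_rfl, by simp, fun i _ _ => by omega, by simpa [nthSeq_cons_one] using h⟩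
    · refine Or.inl ⟨j + 1, by omega, by simp at h2 ⊢; omega, fun i hi hij => ?_, ?_⟩
      · rcases Nat.eq_or_lt_of_le hi with rfl | hi
        · simp [nthSeq_cons_one]
        · obtain ⟨k, rfl⟩ : ∃ k, i = k + 1 := ⟨i - 1, by omega⟩
          simpa [nthSeq_cons_succ _ _ k (by omega)] using h3 k (by omega) (by omega)
      · simpa [nthSeq_cons_succ _ _ j h1] using h4
    · refine Or.inr ⟨by simpa using h1, fun i hi his => ?_⟩
      rcases Nat.eq_or_lt_of_le hi with rfl | hi
      · simp [nthSeq_cons_one]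
      · obtain ⟨k, rfl⟩ : ∃ k, i = k + 1 := ⟨i - 1, by omega⟩
        simpa [nthSeq_cons_succ _ _ k (by omega)] using h2 k (by omega) (by simpa using his)

theorem nil_le' (t : List ℕ+) : [] ≤ t :=
  not_lt.1 (List.not_lt_nil t)

theorem not_cons_le_nil (a : ℕ+) (s : List ℕ+) : ¬ a :: s ≤ [] :=
  not_le.2 (List.nil_lt_cons a s)

theorem cons_le_cons' (a b : ℕ+) (s t : List ℕ+) :
    a :: s ≤ b :: t ↔ a < b ∨ a = b ∧ s ≤ t := by
  rw [le_iff_lt_or_eq, List.cons_lt_cons_iff, le_iff_lt_or_eq, List.cons.injEq]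
  tauto

/-- The order `⪯` is Mathlib's lexicographic linear order on lists. -/
theorem sle_iff_le (s t : List ℕ+) : sle s t ↔ s ≤ t := by
  induction s generalizing t with
  | nil => simp [nil_sle, nil_le']
  | cons a s ih =>
    cases t with
    | nil => simp [not_cons_sle_nil, not_cons_le_nil]
    | cons b t => rw [cons_sle_cons, ih, cons_le_cons']

theorem slt_iff_lt (s t : List ℕ+) : slt s t ↔ s < t := by
  rw [slt, sle_iff_le, lt_iff_le_and_ne]

/-- Since `1` is the least possible entry, `s + ⟨1⟩` is the immediate successor of `s`. -/
theorem lt_append_one_iff (s t : List ℕ+) : t < s ++ [1] ↔ t ≤ s := by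
  induction s generalizing t with
  | nil =>
    cases t with
    | nil => simp
    | cons b t => simp [List.cons_lt_cons_iff, not_cons_le_nil]
  | cons a s ih =>
    cases t with
    | nil => simp [nil_le']
    | cons b t => rw [List.cons_append, List.cons_lt_cons_iff, cons_le_cons', ih]

/-! ### Cardinality of the levels and total weight -/

/-- The finite set `B_n`: an element of `B_{n+1}` is an element of `B_n` followed by an entry from
`{1, …, n + 1}`. Unlike `B`, this family contains the empty sequence, at level `0`. -/
def levelB : ℕ → Finset (List ℕ+)
  | 0 => {[]}
  | n + 1 => Finset.image₂ (fun s k => s ++ [k]) (levelB n) (Finset.Icc 1 n.succPNat)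

theorem card_levelB (n : ℕ) : (levelB n).card = n.factorial := by
  induction n with
  | zero => rfl
  | succ n ih =>
    rw [levelB, Finset.card_image₂, ih, PNat.card_Icc, Nat.factorial_succ, mul_comm]
    · simp
    · intro s s' k k' h
      simpa using List.append_inj' h rfl

theorem mem_levelB (n : ℕ) (s : List ℕ+) :
    s ∈ levelB n ↔ s.length = n ∧ ∀ i, 1 ≤ i → i ≤ s.length → nthSeq s i ≤ i := by
  induction n generalizing s with
  | zero =>
    simp only [levelB, Finset.mem_singleton, List.length_eq_zero_iff]
    refine ⟨?_, fun h => h.1⟩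
    rintro rfl
    exact ⟨rfl, fun i h1 h2 => by simp at h2; omega⟩
  | succ n ih =>
    have hinit : ∀ (u : List ℕ+) (k : ℕ+) (i : ℕ), 1 ≤ i → i ≤ u.length →
        nthSeq (u ++ [k]) i = nthSeq u i := fun u k i h1 h2 => by
      rw [nthSeq, nthSeq, List.getD_append _ _ _ _ (by omega)]
    have hlast : ∀ (u : List ℕ+) (k : ℕ+), nthSeq (u ++ [k]) (u.length + 1) = k :=
      fun u k => by simp [nthSeq]
    simp only [levelB, Finset.mem_image₂, Finset.mem_Icc, one_le, true_and]
    constructor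
    · rintro ⟨u, hu, k, hk, rfl⟩
      obtain ⟨hul, hub⟩ := (ih u).1 hu
      refine ⟨by simp [hul], fun i h1 h2 => ?_⟩
      rw [List.length_append, List.length_singleton] at h2
      rcases Nat.lt_or_ge u.length i with h | h
      · obtain rfl : i = u.length + 1 := by omega
        rw [hlast, hul]
        exact_mod_cast hk
      · rw [hinit u k i h1 h]
        exact hub i h1 h
    · rintro ⟨hl, hb⟩
      rcases List.eq_nil_or_concat s with rfl | ⟨u, k, rfl⟩
      · simp at hl
      · have hul : u.length = n := by simpa using hl
        refine ⟨u, (ih u).2 ⟨hul, fun i h1 h2 => ?_⟩, k, ?_, by simp⟩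
        · rw [← hinit u k i h1 h2]
          simpa using hb i h1 (by simp; omega)
        · have := hb (u.length + 1) (by omega) (by simp)
          rw [List.concat_eq_append, hlast, hul] at this
          exact_mod_cast this

theorem lam_pos (n : ℕ) : 0 < lam n := by
  unfold lam; positivity

theorem sum_levelB_lam (n : ℕ) : ∑ s ∈ levelB n, lam s.length = (1 / 2 : ℝ) ^ n := by
  rw [Finset.sum_congr rfl (g := fun _ => lam n) fun s hs => by rw [((mem_levelB n s).1 hs).1]]
  rw [Finset.sum_const, card_levelB, nsmul_eq_mul, lam, one_div_pow]
  field_simp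

/-- The weight `λ (ℓ s)` of `s`, extended by zero outside `B`. -/
noncomputable def weight : List ℕ+ → ℝ := BSet.indicator fun s => lam s.length

theorem weight_nonneg (s : List ℕ+) : 0 ≤ weight s :=
  Set.indicator_nonneg (fun _ _ => (lam_pos _).le) s

/-- `∑_{s ∈ B} λ (ℓ s) = ∑_{n ≥ 1} 2⁻ⁿ = 1`, because `B_n` has `n!` elements. -/
theorem hasSum_weight : HasSum weight 1 := by
  let e := Equiv.sigmaFiberEquiv (List.length : List ℕ+ → ℕ)
  -- The `n`-th fibre contributes `n! / (2 ^ n * n!)`, except that `B` omits the empty sequence.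
  have hfib : ∀ n : ℕ, HasSum (fun c : {s : List ℕ+ // s.length = n} => weight c)
      (if n = 0 then 0 else (1 / 2 : ℝ) ^ n) := by
    intro n
    split_ifs with hn
    · convert hasSum_zero with c
      have : (c : List ℕ+) ∉ BSet := fun h => by
        have := h.1; have := c.2; omega
      exact Set.indicator_of_notMem this _
    · rw [← sum_levelB_lam]
      have h1 : HasSum (fun s => ({s | s.length = n} : Set (List ℕ+)).indicator weight s)
          (∑ s ∈ levelB n, lam s.length) := by
        have h2 : ∀ s ∈ levelB n, ({s | s.length = n} : Set (List ℕ+)).indicator weight s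
            = lam s.length := fun s hs => by
          obtain ⟨hl, hb⟩ := (mem_levelB n s).1 hs
          have hsB : s ∈ BSet := ⟨by omega, hb⟩
          rw [Set.indicator_of_mem (by exact hl), weight, Set.indicator_of_mem hsB]
        rw [← Finset.sum_congr rfl h2]
        refine hasSum_sum_of_ne_finset_zero fun s hs => ?_
        by_cases hl : s.length = n
        · rw [Set.indicator_of_mem (by exact hl)]
          exact Set.indicator_of_notMem (fun h => hs ((mem_levelB n s).2 ⟨hl, h.2⟩)) _
        · exact Set.indicator_of_notMem (by exact hl) _
      exact hasSum_subtype_iff_indicator.2 h1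
  have hgeom : HasSum (fun n : ℕ => if n = 0 then 0 else (1 / 2 : ℝ) ^ n) 1 := by
    rw [← hasSum_nat_add_iff' 1]
    simpa [pow_succ] using hasSum_geometric_two.mul_right (1 / 2 : ℝ)
  have hsumm : Summable (fun c => weight (e c)) :=
    (summable_sigma_of_nonneg fun c => weight_nonneg _).2
      ⟨fun n => (hfib n).summable, by
        convert hgeom.summable with n
        exact (hfib n).tsum_eq⟩
  rw [← e.hasSum_iff]
  exact HasSum.sigma_of_hasSum hgeom hfib hsumm

/-! ### The intervals `[τ s, τ (s + ⟨1⟩)]` -/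

theorem tau_eq (s : List ℕ+) : tau s = ∑' t, (Set.Iio s).indicator weight t := by
  have h : {t : List ℕ+ | t ∈ BSet ∧ slt t s} = Set.Iio s ∩ BSet := by
    ext t
    simp [slt_iff_lt, and_comm]
  rw [weight, Set.indicator_indicator, ← h, ← tsum_subtype]
  rfl

theorem tau_append_one_eq (s : List ℕ+) :
    tau (s ++ [1]) = ∑' t, (Set.Iic s).indicator weight t := by
  rw [tau_eq]
  congr! 3
  ext t
  simp [lt_append_one_iff]

theorem tau_nonneg (s : List ℕ+) : 0 ≤ tau s :=
  tsum_nonneg fun _ => (lam_pos _).le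

theorem tau_le_one (s : List ℕ+) : tau s ≤ 1 := by
  rw [tau_eq, ← hasSum_weight.tsum_eq]
  exact (hasSum_weight.summable.indicator _).tsum_le_tsum
    (fun t => Set.indicator_le_self' (fun _ _ => weight_nonneg _) t) hasSum_weight.summable

theorem tau_append_one_le {s t : List ℕ+} (h : s < t) : tau (s ++ [1]) ≤ tau t := by
  rw [tau_append_one_eq, tau_eq]
  exact (hasSum_weight.summable.indicator _).tsum_le_tsum
    (fun u => Set.indicator_le_indicator_of_subset (Set.Iic_subset_Iio.2 h) weight_nonneg u)
    (hasSum_weight.summable.indicator _)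

/-- The interval attached to `s` has length `λ (ℓ s)`. -/
theorem tau_append_one {s : List ℕ+} (hs : s ∈ BSet) :
    tau (s ++ [1]) = tau s + lam s.length := by
  have h : (Set.Iic s).indicator weight =
      fun t => (Set.Iio s).indicator weight t + ({s} : Set _).indicator weight t := by
    rw [← Set.Iio_union_right, Set.indicator_union_of_disjoint (by simp)]
  rw [tau_append_one_eq, h, (hasSum_weight.summable.indicator _).tsum_add
    (hasSum_weight.summable.indicator _), ← tau_eq, ← tsum_subtype, tsum_singleton, weight,
    Set.indicator_of_mem hs]

theorem pairwise_disjoint_Ico_tau : Pairwise fun s t : BSet =>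
    Disjoint (Set.Ico (tau s) (tau (s.1 ++ [1]))) (Set.Ico (tau t) (tau (t.1 ++ [1]))) := by
  intro s t hst
  rw [Set.Ico_disjoint_Ico]
  rcases lt_or_gt_of_ne (Subtype.coe_injective.ne hst) with h | h
  · exact (min_le_left _ _).trans ((tau_append_one_le h).trans (le_max_right _ _))
  · exact (min_le_right _ _).trans ((tau_append_one_le h).trans (le_max_left _ _))

open MeasureTheory in
/-- The intervals `[τ s, τ (s + ⟨1⟩)]`, `s ∈ B`, do not overlap and have total length `1`, so they
cover a dense subset of `[0, 1]`. -/
theorem dense_iUnion_Icc_tau : Dense {x : Set.Icc (0 : ℝ) 1 |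
    ∃ s ∈ BSet, (x : ℝ) ∈ Set.Icc (tau s) (tau (s ++ [1]))} := by
  set V : Set ℝ := ⋃ s : BSet, Set.Ico (tau s) (tau (s.1 ++ [1])) with hV
  have hVmeas : MeasurableSet V := MeasurableSet.iUnion fun _ => measurableSet_Ico
  have hVsub : V ⊆ Set.Icc 0 1 := Set.iUnion_subset fun s x hx =>
    ⟨(tau_nonneg _).trans hx.1, hx.2.le.trans (tau_le_one _)⟩
  have hsum : HasSum (fun s : BSet => lam (s : List ℕ+).length) 1 :=
    hasSum_subtype_iff_indicator.2 hasSum_weight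
  have hVvol : volume V = 1 := by
    rw [hV, measure_iUnion pairwise_disjoint_Ico_tau fun _ => measurableSet_Ico]
    simp only [Real.volume_Ico]
    rw [← ENNReal.ofReal_one, ← hsum.tsum_eq,
      ENNReal.ofReal_tsum_of_nonneg (fun _ => (lam_pos _).le) hsum.summable]
    exact tsum_congr fun s => by rw [tau_append_one s.2, add_sub_cancel_left]
  have hnull : volume (Set.Icc 0 1 \ V) = 0 := by
    rw [measure_sdiff hVsub hVmeas.nullMeasurableSet (by simp [hVvol]), hVvol]
    simp
  have hdense : Dense {x : ℝ | x ∈ Set.Icc (0 : ℝ) 1 → x ∈ V} := by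
    refine Measure.dense_of_ae (μ := volume) ?_
    rw [ae_iff]
    convert hnull using 2
    ext x
    simp [and_assoc]
  rw [Subtype.dense_iff]
  intro x hx
  rw [← closure_Ioo zero_ne_one] at hx
  refine closure_minimal ?_ isClosed_closure hx
  refine (hdense.open_subset_closure_inter isOpen_Ioo).trans (closure_mono ?_)
  rintro y ⟨hy, hyV⟩
  have hyI := Set.Ioo_subset_Icc_self hy
  obtain ⟨s, hs⟩ := Set.mem_iUnion.1 (hyV hyI)
  exact ⟨⟨y, hyI⟩, ⟨s, s.2, hs.1, hs.2.le⟩, rfl⟩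

/-! ### Gluing and extension -/

section

variable {X : Type*} [MetricSpace X] (x₀ : X) (φ : List ℕ+ → ℝ → X)

/-- Points of different intervals are compared through the base point `x₀`, which is attained at
the right end of the earlier interval and at the left end of the later one. -/
theorem dist_le_of_mem_Icc_tau
    (hlip : ∀ s ∈ BSet, LipschitzOnWith 1 (φ s) (Set.Icc (tau s) (tau (s ++ [1]))))
    (hstart : ∀ s ∈ BSet, φ s (tau s) = x₀)
    (hend : ∀ s ∈ BSet, φ s (tau (s ++ [1])) = x₀)
    {s t : List ℕ+} (hs : s ∈ BSet) (ht : t ∈ BSet) {x y : ℝ}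
    (hx : x ∈ Set.Icc (tau s) (tau (s ++ [1]))) (hy : y ∈ Set.Icc (tau t) (tau (t ++ [1])))
    (hxy : x ≤ y) : dist (φ s x) (φ t y) ≤ y - x := by
  rcases lt_trichotomy s t with h | rfl | h
  · have h1 := (hlip s hs).dist_le_mul x hx _ (Set.right_mem_Icc.2 (hx.1.trans hx.2))
    have h2 := (hlip t ht).dist_le_mul _ (Set.left_mem_Icc.2 (hy.1.trans hy.2)) y hy
    rw [hend s hs, NNReal.coe_one, one_mul, Real.dist_eq, abs_sub_comm,
      abs_of_nonneg (sub_nonneg.2 hx.2)] at h1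
    rw [hstart t ht, NNReal.coe_one, one_mul, Real.dist_eq, abs_sub_comm,
      abs_of_nonneg (sub_nonneg.2 hy.1)] at h2
    have h3 := tau_append_one_le h
    linarith [dist_triangle (φ s x) x₀ (φ t y)]
  · have h1 := (hlip s hs).dist_le_mul x hx y hy
    rwa [NNReal.coe_one, one_mul, Real.dist_eq, abs_sub_comm,
      abs_of_nonneg (sub_nonneg.2 hxy)] at h1
  · -- Here `y ≤ τ (t + ⟨1⟩) ≤ τ s ≤ x ≤ y`, so `x = y` is a common end point.
    have h3 := tau_append_one_le h
    have hx' : x = tau s := by linarith [hx.1, hy.2]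
    have hy' : y = tau (t ++ [1]) := by linarith [hx.1, hy.2]
    have : φ s x = φ t y := by
      conv_lhs => rw [hx', hstart s hs]
      conv_rhs => rw [hy', hend t ht]
    rw [this, dist_self]
    linarith

end

/-- Let `X` be a complete metric space, `x₀ ∈ X`, and suppose that for each `s ∈ B` a
`1`-Lipschitz map `φ_s : [τ s, τ (s + ⟨1⟩)] → X` is given with
`φ_s (τ s) = φ_s (τ (s + ⟨1⟩)) = x₀`. Then there is a unique `1`-Lipschitz map
`φ : [0,1] → X` whose restriction to `[τ s, τ (s + ⟨1⟩)]` equals `φ_s` for every `s ∈ B`. -/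
theorem exists_unique_lipschitz_extension {X : Type*} [MetricSpace X] [CompleteSpace X]
    (x₀ : X) (φ : List ℕ+ → ℝ → X)
    (hlip : ∀ s ∈ BSet, LipschitzOnWith 1 (φ s) (Set.Icc (tau s) (tau (s ++ [1]))))
    (hstart : ∀ s ∈ BSet, φ s (tau s) = x₀)
    (hend : ∀ s ∈ BSet, φ s (tau (s ++ [1])) = x₀) :
    ∃! f : Set.Icc (0 : ℝ) 1 → X, LipschitzWith 1 f ∧
      ∀ s ∈ BSet, ∀ t : Set.Icc (0 : ℝ) 1,
        (t : ℝ) ∈ Set.Icc (tau s) (tau (s ++ [1])) → f t = φ s (t : ℝ) := by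
  have hU := dense_iUnion_Icc_tau
  set U := {x : Set.Icc (0 : ℝ) 1 | ∃ s ∈ BSet, (x : ℝ) ∈ Set.Icc (tau s) (tau (s ++ [1]))}
  have key {s t : List ℕ+} (hs : s ∈ BSet) (ht : t ∈ BSet) {x y : ℝ}
      (hx : x ∈ Set.Icc (tau s) (tau (s ++ [1]))) (hy : y ∈ Set.Icc (tau t) (tau (t ++ [1]))) :
      dist (φ s x) (φ t y) ≤ dist x y := by
    rcases le_total x y with h | h
    · exact (dist_le_of_mem_Icc_tau x₀ φ hlip hstart hend hs ht hx hy h).trans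
        (by rw [dist_comm, Real.dist_eq]; exact le_abs_self _)
    · rw [dist_comm]
      exact (dist_le_of_mem_Icc_tau x₀ φ hlip hstart hend ht hs hy hx h).trans
        (by rw [Real.dist_eq]; exact le_abs_self _)
  choose σ hσB hσ using fun x : U => x.2
  let g : U → X := fun x => φ (σ x) x
  have hg : LipschitzWith 1 g := LipschitzWith.of_dist_le_mul fun x y => by
    rw [NNReal.coe_one, one_mul]
    exact key (hσB x) (hσB y) (hσ x) (hσ y)
  have hf : LipschitzWith 1 (hU.extend g) := hU.lipschitzWith_extend hg
  refine ⟨hU.extend g, ⟨hf, fun s hs t ht => ?_⟩, fun f' hf' => ?_⟩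
  · have h1 : hU.extend g t = g ⟨t, s, hs, ht⟩ := hU.extend_eq hg.continuous ⟨t, s, hs, ht⟩
    rw [h1, ← dist_le_zero]
    exact (key (hσB _) hs (hσ _) ht).trans_eq (dist_self _)
  · refine Continuous.ext_on hU hf'.1.continuous hf.continuous fun t ht => ?_
    rw [show hU.extend g t = g ⟨t, ht⟩ from hU.extend_eq hg.continuous ⟨t, ht⟩]
    exact hf'.2 _ (hσB ⟨t, ht⟩) t (hσ ⟨t, ht⟩)
end

section
/- The homotopy class of the loop σ_1 (a loop in ℍ based at (0,0)) does not belong to the commutator subgroup of the fundamental group π₁(ℍ, (0,0)). -/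
/-- The circle `L_n ⊂ ℝ² = ℂ` of radius `1/n` centred at `(1/n, 0)`. -/
noncomputable def Lcirc (n : ℕ) : Set ℂ := Metric.sphere ((1 / (n : ℝ) : ℝ) : ℂ) (1 / (n : ℝ))

/-- The Hawaiian Earring `ℍ ⊂ ℝ² = ℂ`, the union of the circles `L_n`, `n ≥ 1`. -/
def HSet : Set ℂ := ⋃ n ∈ {n : ℕ | 1 ≤ n}, Lcirc n

open Classical in
/-- The metric `d` on the Hawaiian Earring: `d x y = ‖x - y‖` (Euclidean norm) if `x` and
`y` lie on a common circle `L_n`, and `d x y = ‖x‖ + ‖y‖` otherwise. -/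
noncomputable def HEdist (x y : ℂ) : ℝ :=
  if ∃ n : ℕ, 1 ≤ n ∧ x ∈ Lcirc n ∧ y ∈ Lcirc n then ‖x - y‖ else ‖x‖ + ‖y‖

/-- The loop `φ_n : [0,1] → ℍ` traversing the circle `L_n` at constant speed:
`φ_n t = (-cos(2πt)/n + 1/n, sin(2πt)/n)`. -/
noncomputable def phiLoop (n : ℕ) (t : ℝ) : ℂ :=
  Complex.ofReal (-(Real.cos (2 * Real.pi * t)) / n + 1 / n) +
    Complex.ofReal (Real.sin (2 * Real.pi * t) / n) * Complex.I

open Classical in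
/-- The commutator loop `c_k : [0, λ k] → ℍ`: the concatenation
`φ_{n_k} · φ_{n_k + 1} · φ_{n_k}⁻¹ · φ_{n_k + 1}⁻¹ : [0,4] → ℍ` precomposed with the
reparametrization `t ↦ 4 t / λ k`. -/
noncomputable def cLoop (nseq : ℕ → ℕ) (k : ℕ) (t : ℝ) : ℂ :=
  let u := 4 * t / lam k
  if u ≤ 1 then phiLoop (nseq k) u
  else if u ≤ 2 then phiLoop (nseq k + 1) (u - 1)
  else if u ≤ 3 then phiLoop (nseq k) (1 - (u - 2))
  else phiLoop (nseq k + 1) (1 - (u - 3))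

lemma zero_mem_HSet : (0 : ℂ) ∈ HSet := by
  have h1 : (0 : ℂ) ∈ Lcirc 1 := by
    simp [Lcirc, Metric.mem_sphere, Complex.dist_eq]
  exact Set.mem_biUnion (by norm_num : (1 : ℕ) ∈ {n : ℕ | 1 ≤ n}) h1

/-! ### Coverings with two charts -/

namespace HECover

section Covering
open Set Topology Filter Bundle

/-- The fibre coordinate of the two-chart covering relative to the `U`-chart: the `U`-chart
(`false`) is the reference, and the `V`-chart (`true`) differs from it by `κ`. Thus
`chart κ j x * (chart κ i x)⁻¹` is the transition function from the chart `i` to `j`. -/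
def chart {X G : Type*} [One G] (κ : X → G) : Bool → X → G
  | false => fun _ => 1
  | true => κ

open Classical in
/-- The principal covering of `X` with discrete structure group `G` acting on the fibres by
left multiplication, obtained by gluing `U × G` and `V × G` along `U ∩ V` by the locally
constant transition function `κ`. -/
noncomputable def core {X G : Type*} [TopologicalSpace X] [Group G] [TopologicalSpace G]
    [DiscreteTopology G] (U V : Set X) (hU : IsOpen U) (hV : IsOpen V)
    (hUV : ∀ x, x ∈ U ∨ x ∈ V) (κ : X → G)
    (hκ : ∀ x ∈ U ∩ V, ∀ᶠ z in 𝓝 x, κ z = κ x) : FiberBundleCore Bool X G where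
  baseSet i := if i then V else U
  isOpen_baseSet i := by cases i <;> simpa
  indexAt x := if x ∈ U then false else true
  mem_baseSet_at x := by
    by_cases h : x ∈ U
    · simp [h]
    · simpa [h] using (hUV x).resolve_left h
  coordChange i j x g := chart κ j x * (chart κ i x)⁻¹ * g
  coordChange_self i x _ v := by simp
  continuousOn_coordChange i j := by
    have key : ContinuousOn (fun x => chart κ j x * (chart κ i x)⁻¹)
        ((if i then V else U) ∩ (if j then V else U)) := by
      intro x hx
      apply ContinuousAt.continuousWithinAt
      apply tendsto_nhds_of_eventually_eq
      cases i <;> cases j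
      · simp [chart]
      · filter_upwards [hκ x ⟨by simpa using hx.1, by simpa using hx.2⟩] with z hz
        simp [chart, hz]
      · filter_upwards [hκ x ⟨by simpa using hx.2, by simpa using hx.1⟩] with z hz
        simp [chart, hz]
      · simp
    exact (key.comp continuousOn_fst fun p hp => hp.1).mul continuousOn_snd
  coordChange_comp i j k x _ v := by group

/-- The monodromy homomorphism of the covering `core`, with a way to compute it. Along a loop `γ`
the functions `u` and `v` are the fibre coordinates of the lift of `γ` in the charts over `U` and
`V`: each is constant as long as `γ` stays in its chart, and they are related by `κ` on `U ∩ V`.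
No connectedness of `U`, `V` or `X` is required. -/
theorem exists_hom {X G : Type*} [TopologicalSpace X] [Group G]
    (U V : Set X) (hU : IsOpen U) (hV : IsOpen V)
    (hUV : ∀ x, x ∈ U ∨ x ∈ V) (κ : X → G)
    (hκ : ∀ x ∈ U ∩ V, ∀ᶠ z in 𝓝 x, κ z = κ x) (x₀ : X) (hx₀ : x₀ ∈ U) :
    ∃ Φ : FundamentalGroup X x₀ →* G, ∀ γ : Path x₀ x₀, ∃ u v : ℝ → G,
      u 0 = 1 ∧ u 1 = Φ (FundamentalGroup.fromPath ⟦γ⟧) ∧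
      (∀ a b, 0 ≤ a → a ≤ b → b ≤ 1 → (∀ t ∈ Icc a b, γ.extend t ∈ U) → u a = u b) ∧
      (∀ a b, 0 ≤ a → a ≤ b → b ≤ 1 → (∀ t ∈ Icc a b, γ.extend t ∈ V) → v a = v b) ∧
      (∀ t, γ.extend t ∈ U ∩ V → v t = κ (γ.extend t) * u t) := by
  let _ : TopologicalSpace G := ⊥
  have : DiscreteTopology G := ⟨rfl⟩
  let Z := core U V hU hV hUV κ hκ
  have cov : IsCoveringMap (Z.proj) := FiberBundle.isCoveringMap (F := G) (E := Z.Fiber)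
  -- Right multiplication by `h` on the fibres is a deck transformation, since the transition
  -- functions act on the left; this is what makes monodromy multiplicative.
  let R : G → Z.TotalSpace → Z.TotalSpace := fun h p => ⟨p.1, (show G from p.2) * h⟩
  have hR : ∀ h, Continuous (R h) := by
    intro h
    refine continuous_iff_continuousAt.2 fun p => ?_
    have hp : p ∈ (Z.localTrivAt p.1).source := by simp
    refine ((Z.localTrivAt p.1).toOpenPartialHomeomorph.continuousAt_iff_continuousAt_comp_left
      ?_).2 ?_
    · exact (Z.continuous_proj.continuousAt).preimage_mem_nhds
        ((Z.localTrivAt p.1).open_baseSet.mem_nhds (by simp))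
    · have hc : ContinuousAt (Z.localTrivAt p.1) p := (Z.localTrivAt p.1).continuousAt hp
      have : ContinuousAt (fun q => ((Z.localTrivAt p.1 q).1, (Z.localTrivAt p.1 q).2 * h)) p :=
        (continuous_fst.continuousAt.comp hc).prodMk
          ((continuous_snd.continuousAt.comp hc).mul continuousAt_const)
      convert this using 1
      funext q
      refine Prod.ext rfl ?_
      change chart κ _ _ * (chart κ _ _)⁻¹ * (_ * h) = chart κ _ _ * (chart κ _ _)⁻¹ * _ * h
      rw [← mul_assoc]
  let e : G → Z.proj ⁻¹' {x₀} := fun g => ⟨⟨x₀, g⟩, rfl⟩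
  have hlift : ∀ (γ : Path x₀ x₀) (g h : G),
      cov.liftPath γ (e (g * h)).1 γ.source = fun t => R h (cov.liftPath γ (e g).1 γ.source t) := by
    intro γ g h
    symm
    rw [cov.eq_liftPath_iff]
    refine ⟨(hR h).comp (ContinuousMap.continuous _), ?_, ?_⟩
    · funext t
      exact congrFun (cov.liftPath_lifts γ (e g).1 γ.source) t
    · simp only [cov.liftPath_zero]; rfl
  let Φ₀ : FundamentalGroup X x₀ → G := fun γ => (cov.monodromy γ (e 1)).1.2
  have hfib : ∀ p : Z.proj ⁻¹' {x₀}, p = e p.1.2 := by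
    rintro ⟨⟨x, g⟩, hx⟩
    obtain rfl : x = x₀ := hx
    rfl
  have hequi : ∀ (γ : FundamentalGroup X x₀) (g : G), cov.monodromy γ (e g) = e (Φ₀ γ * g) := by
    intro γ g
    rw [hfib (cov.monodromy γ (e g))]
    congr 1
    induction γ using Path.Homotopic.Quotient.ind with | mk γ =>
    have := congrFun (hlift γ 1 g) 1
    rw [one_mul] at this
    exact congrArg (fun p : Z.TotalSpace => (show G from p.2)) this
  let Φ : FundamentalGroup X x₀ →* G :=
    { toFun := Φ₀
      map_one' := by
        change (cov.monodromy (.refl x₀) (e 1)).1.2 = _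
        rw [cov.monodromy_refl]; rfl
      map_mul' := by
        intro p q
        -- In `FundamentalGroup`, `p * q` is composition in the fundamental groupoid, which
        -- runs through `q` first.
        change (cov.monodromy (Path.Homotopic.Quotient.trans q p) (e 1)).1.2 = _
        rw [cov.monodromy_trans_apply, hequi q, hequi p, mul_one] }
  refine ⟨Φ, fun γ => ?_⟩
  let Γ := cov.liftPath γ (e 1).1 γ.source
  have hΓp : ∀ t, (Γ t).1 = γ t := fun t => congrFun (cov.liftPath_lifts γ (e 1).1 γ.source) t
  let pr : ℝ → unitInterval := projIcc 0 1 zero_le_one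
  let w : Bool → ℝ → G := fun i t => (Z.localTriv i (Γ (pr t))).2
  have hext : ∀ t, (Γ (pr t)).1 = γ.extend t := fun t => hΓp _
  have hidx : Z.indexAt x₀ = false := if_pos hx₀
  have hconst : ∀ i a b, a ≤ b → (∀ t ∈ Icc a b, γ.extend t ∈ Z.baseSet i) → w i a = w i b := by
    intro i a b hab hin
    have hc : ContinuousOn (w i) (Icc a b) := by
      have h1 : ContinuousOn (fun t => Z.localTriv i (Γ (pr t))) (Icc a b) := by
        refine (Z.localTriv i).continuousOn.comp
          (Γ.continuous.comp continuous_projIcc).continuousOn ?_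
        intro t ht
        have := hin t ht
        rw [← hext] at this
        exact this
      exact continuous_snd.comp_continuousOn h1
    exact isPreconnected_Icc.constant hc (left_mem_Icc.2 hab) (right_mem_Icc.2 hab)
  have hw0 : ∀ t, γ.extend t = x₀ → w false t = (Γ (pr t)).2 := by
    intro t ht
    change chart κ false _ * (chart κ (Z.indexAt (Γ (pr t)).1) _)⁻¹ * _ = _
    rw [hext, ht, hidx]
    simp only [chart, inv_one, mul_one]
    exact one_mul (M := G) _
  refine ⟨w false, w true, ?_, ?_, ?_, ?_, ?_⟩
  · rw [hw0 0 (by simp)]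
    have : Γ (pr 0) = (e 1).1 := by
      simp only [pr, projIcc_left]
      exact cov.liftPath_zero _ _ _
    rw [this]
  · rw [hw0 1 (by simp)]
    have : pr 1 = 1 := by simp only [pr, projIcc_right]; rfl
    rw [this]; rfl
  · intro a b _ hab _ h
    exact hconst false a b hab (fun t ht => by
      change _ ∈ (if false then V else U)
      simpa using h t ht)
  · intro a b _ hab _ h
    exact hconst true a b hab (fun t ht => by
      change _ ∈ (if true then V else U)
      simpa using h t ht)
  · intro t _
    change chart κ true _ * (chart κ (Z.indexAt (Γ (pr t)).1) _)⁻¹ * _ =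
      _ * (chart κ false _ * (chart κ (Z.indexAt (Γ (pr t)).1) _)⁻¹ * _)
    rw [hext]
    simp only [chart, one_mul]
    exact mul_assoc (G := G) _ _ _

end Covering

/-! ### A quasimorphism and an unbounded commutator power -/

section Quasimorphism
open Set
open scoped commutatorElement

/-- An element of the commutator subgroup is a product of a fixed number of commutators. As
`f ↦ f 0` is a quasimorphism of defect at most `1` on lifts of circle homeomorphisms, this bounds
its value on all homomorphic images of that element simultaneously. -/
theorem commutator_bound {Γ : Type*} [Group Γ] {z : Γ} (hz : z ∈ commutator Γ) :
    ∃ C : ℝ, ∀ Φ : Γ →* CircleDeg1Liftˣ, |(Φ z : CircleDeg1Lift) 0| ≤ C := by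
  have q : ∀ f g : CircleDeg1Liftˣ,
      |(f : CircleDeg1Lift) 0 + (g : CircleDeg1Lift) 0
        - ((f * g : CircleDeg1Liftˣ) : CircleDeg1Lift) 0| < 1 := by
    intro f g
    exact (f : CircleDeg1Lift).dist_map_map_zero_lt g
  rw [commutator_eq_closure] at hz
  induction hz using Subgroup.closure_induction with
  | mem x hx =>
    obtain ⟨a, b, rfl⟩ := hx
    refine ⟨3, fun Φ => ?_⟩
    have h1 := q (Φ ⁅a, b⁆) (Φ b * Φ a)
    have h2 := q (Φ b) (Φ a)
    have h3 := q (Φ a) (Φ b)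
    have e : Φ ⁅a, b⁆ * (Φ b * Φ a) = Φ a * Φ b := by
      simp [commutatorElement_def, mul_assoc]
    rw [e] at h1
    rw [abs_lt] at h1 h2 h3
    rw [abs_le]
    constructor <;> linarith
  | one => exact ⟨0, fun Φ => by simp⟩
  | mul x y _ _ hx hy =>
    obtain ⟨C, hC⟩ := hx
    obtain ⟨D, hD⟩ := hy
    refine ⟨C + D + 1, fun Φ => ?_⟩
    have h1 := q (Φ x) (Φ y)
    rw [← map_mul] at h1
    have h2 := hC Φ
    have h3 := hD Φ
    rw [abs_lt] at h1
    rw [abs_le] at *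
    constructor <;> linarith
  | inv x _ hx =>
    obtain ⟨C, hC⟩ := hx
    refine ⟨C + 1, fun Φ => ?_⟩
    have h1 := q (Φ x) (Φ x⁻¹)
    rw [← map_mul, mul_inv_cancel, map_one] at h1
    have h2 := hC Φ
    simp only [Units.val_one, CircleDeg1Lift.coe_one, id] at h1
    rw [abs_lt] at h1
    rw [abs_le] at *
    constructor <;> linarith

/-- The lift of a piecewise linear circle homeomorphism fixing the integers, with slopes `3` on
`[0, 1/4]` and `1/3` on `[1/4, 1]`. -/
noncomputable def kinkFun (x : ℝ) : ℝ := ⌊x⌋ + min (3 * Int.fract x) (2 / 3 + Int.fract x / 3)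

/-- The inverse of `kinkFun`, with slopes `1/3` on `[0, 3/4]` and `3` on `[3/4, 1]`. -/
noncomputable def kinkInv (x : ℝ) : ℝ := ⌊x⌋ + max (Int.fract x / 3) (3 * Int.fract x - 2)

lemma mono_of_fract {φ : ℝ → ℝ} (h : Monotone φ) (h0 : ∀ r, 0 ≤ r → 0 ≤ φ r)
    (h1 : ∀ r, r < 1 → φ r ≤ 1) : Monotone fun x : ℝ => ⌊x⌋ + φ (Int.fract x) := by
  intro x y hxy
  rcases (Int.floor_mono hxy).eq_or_lt with e | e
  · have : Int.fract x ≤ Int.fract y := by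
      rw [Int.fract, Int.fract, e]; linarith
    have := h this
    simp only [e]; linarith
  · have h2 : (⌊x⌋ : ℝ) + 1 ≤ ⌊y⌋ := by exact_mod_cast e
    have := h1 _ (Int.fract_lt_one x)
    have := h0 _ (Int.fract_nonneg y)
    simp only; linarith

lemma floor_fract_of {n : ℤ} {r : ℝ} (h0 : 0 ≤ r) (h1 : r < 1) :
    ⌊(n : ℝ) + r⌋ = n ∧ Int.fract ((n : ℝ) + r) = r := by
  have : ⌊(n : ℝ) + r⌋ = n := by
    rw [Int.floor_eq_iff]; constructor <;> linarith
  refine ⟨this, ?_⟩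
  rw [Int.fract, this]; ring

/-- `kinkFun` as an invertible element of the monoid of monotone degree one lifts. -/
noncomputable def kink : CircleDeg1Liftˣ where
  val := ⟨⟨kinkFun, mono_of_fract (φ := fun r => min (3 * r) (2 / 3 + r / 3))
      (fun a b h => min_le_min (by linarith) (by linarith))
      (fun r h => le_min (by linarith) (by linarith))
      (fun r h => (min_le_right _ _).trans (by linarith))⟩, fun x => by
        simp [kinkFun]; ring⟩
  inv := ⟨⟨kinkInv, mono_of_fract (φ := fun r => max (r / 3) (3 * r - 2))
      (fun a b h => max_le_max (by linarith) (by linarith))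
      (fun r h => (by linarith : 0 ≤ r / 3).trans (le_max_left _ _))
      (fun r h => max_le (by linarith) (by linarith))⟩, fun x => by
        simp [kinkInv]; ring⟩
  val_inv := by
    ext x
    change kinkFun (kinkInv x) = x
    have h0 := Int.fract_nonneg x
    have h1 := Int.fract_lt_one x
    have hx := Int.floor_add_fract x
    set r := Int.fract x
    obtain ⟨e1, e2⟩ := floor_fract_of (n := ⌊x⌋) (r := max (r / 3) (3 * r - 2))
      ((by linarith : 0 ≤ r / 3).trans (le_max_left _ _)) (max_lt (by linarith) (by linarith))
    rw [kinkFun, kinkInv, e1, e2]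
    rcases le_total (r / 3) (3 * r - 2) with h | h
    · rw [max_eq_right h, min_eq_right (by linarith)]; linarith
    · rw [max_eq_left h, min_eq_left (by linarith)]; linarith
  inv_val := by
    ext x
    change kinkInv (kinkFun x) = x
    have h0 := Int.fract_nonneg x
    have h1 := Int.fract_lt_one x
    have hx := Int.floor_add_fract x
    set r := Int.fract x
    obtain ⟨e1, e2⟩ := floor_fract_of (n := ⌊x⌋) (r := min (3 * r) (2 / 3 + r / 3))
      (le_min (by linarith) (by linarith)) ((min_le_right _ _).trans_lt (by linarith))
    rw [kinkFun, kinkInv, e1, e2]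
    rcases le_total (3 * r) (2 / 3 + r / 3) with h | h
    · rw [min_eq_left h, max_eq_left (by linarith)]; linarith
    · rw [min_eq_right h, max_eq_right (by linarith)]; linarith

lemma kink_zero : kink 0 = 0 := by
  change kinkFun 0 = 0
  norm_num [kinkFun]

lemma kink_quarter : kink (1 / 4) = 3 / 4 := by
  change kinkFun (1 / 4) = 3 / 4
  have : ⌊(1 / 4 : ℝ)⌋ = 0 := by rw [Int.floor_eq_iff]; norm_num
  rw [kinkFun, Int.fract, this]
  norm_num

/-- The translation `y ↦ x + y`, as an invertible degree one lift. -/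
noncomputable def shift (x : ℝ) : CircleDeg1Liftˣ :=
  CircleDeg1Lift.translate (Multiplicative.ofAdd x)

lemma shift_apply (x y : ℝ) : shift x y = x + y := CircleDeg1Lift.translate_apply x y

/-- Two lifts of circle homeomorphisms whose commutator sends `0` to `1`. Since lifts commute with
integer translations, its `N`-th power sends `0` to `N`. -/
theorem exists_pair : ∃ f g : CircleDeg1Liftˣ, ∀ N : ℕ,
    ((f * g * f⁻¹ * g⁻¹) ^ N : CircleDeg1Liftˣ) 0 = N := by
  -- The pair is chosen so that `g⁻¹`, `f⁻¹`, `g`, `f` successively take `0` to `1/4`, `1/2`, `3/4`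
  -- and `1`.
  let f := shift (1 / 4) * kink * shift (-(1 / 2))
  let g := kink * shift (-(1 / 4))
  have mulA : ∀ (a b : CircleDeg1Liftˣ) (x : ℝ), (a * b) x = a (b x) := fun a b x => rfl
  have f1 : f (1 / 2) = 1 / 4 := by
    simp only [f, mulA, shift_apply]; norm_num [kink_zero]
  have f2 : f (3 / 4) = 1 := by
    simp only [f, mulA, shift_apply]
    rw [show (-(1/2) + 3 / 4 : ℝ) = 1 / 4 by norm_num, kink_quarter]; norm_num
  have g1 : g (1 / 4) = 0 := by
    simp only [g, mulA, shift_apply]; norm_num [kink_zero]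
  have g2 : g (1 / 2) = 3 / 4 := by
    simp only [g, mulA, shift_apply]
    rw [show (-(1/4) + 1 / 2 : ℝ) = 1 / 4 by norm_num, kink_quarter]
  have inv : ∀ (a : CircleDeg1Liftˣ) (x y : ℝ), a x = y → a⁻¹ y = x := by
    rintro a x _ rfl; exact CircleDeg1Lift.units_inv_apply_apply a x
  refine ⟨f, g, ?_⟩
  have hc : (f * g * f⁻¹ * g⁻¹) 0 = 1 := by
    simp only [mulA]
    rw [inv g _ _ g1, inv f _ _ f1, g2, f2]
  intro N
  induction N with
  | zero => simp
  | succ N ih =>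
    rw [pow_succ, mulA, hc, ← zero_add (1 : ℝ), CircleDeg1Lift.map_add_one, ih]
    push_cast; ring

/-- A function that is multiplied by `c` across each of finitely many non-overlapping intervals
`[a i, b i]`, and is constant off these intervals, gains one factor `c` per interval. -/
theorem steps {G : Type*} [Group G] {ι : Type*} [DecidableEq ι] (a b : ι → ℝ) (c : G)
    (u : ℝ → G)
    (T : Finset ι) (hab : ∀ i ∈ T, 0 ≤ a i ∧ a i < b i)
    (hdisj : ∀ i ∈ T, ∀ j ∈ T, i ≠ j → b i ≤ a j ∨ b j ≤ a i)
    (hstep : ∀ i ∈ T, u (b i) = c * u (a i)) (z : ℝ) (hz : 0 ≤ z) (hbz : ∀ i ∈ T, b i ≤ z)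
    (hconst : ∀ x y, 0 ≤ x → x ≤ y → y ≤ z → (∀ i ∈ T, b i ≤ x ∨ y ≤ a i) → u x = u y) :
    u z = c ^ T.card * u 0 := by
  induction T using Finset.induction_on_max_value b generalizing z with
  | empty => simpa using (hconst 0 z le_rfl hz le_rfl (by simp)).symm
  | insert i T hi hmax ih =>
    have hi' : i ∈ insert i T := Finset.mem_insert_self _ _
    have hj : ∀ {j}, j ∈ T → j ∈ insert i T := fun h => Finset.mem_insert_of_mem h
    have hle : ∀ j ∈ T, b j ≤ a i := by
      intro j hjT
      have hne : i ≠ j := by rintro rfl; exact hi hjT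
      rcases hdisj i hi' j (hj hjT) hne with h | h
      · have := (hab j (hj hjT)).2
        have := hmax j hjT
        linarith
      · exact h
    have hbi := hbz i hi'
    have habi := hab i hi'
    have h1 := ih (fun j h => hab j (hj h)) (fun j h k h' => hdisj j (hj h) k (hj h'))
      (fun j h => hstep j (hj h)) (a i) habi.1 hle (fun x y hx hxy hy h =>
        hconst x y hx hxy (by linarith) (by
          intro j hjm
          rcases Finset.mem_insert.1 hjm with rfl | h'
          · exact Or.inr hy
          · exact h j h'))
    have h2 : u (b i) = u z := hconst _ _ (by linarith) hbi le_rfl (by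
      intro j hjm
      rcases Finset.mem_insert.1 hjm with rfl | h'
      · exact Or.inl le_rfl
      · exact Or.inl (hmax j h'))
    rw [← h2, hstep i hi', h1, Finset.card_insert_of_notMem hi, pow_succ', mul_assoc]

end Quasimorphism

end HECover

/-! ### The order on sequences and the intervals `[τ s, τ (s + ⟨1⟩)]` -/

namespace HESeq
open Set Topology Filter MeasureTheory
open scoped ENNReal

lemma nthSeq_cons_one (a : ℕ+) (s : List ℕ+) : nthSeq (a :: s) 1 = a := rfl

lemma nthSeq_cons (a : ℕ+) (s : List ℕ+) {j : ℕ} (hj : 1 ≤ j) :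
    nthSeq (a :: s) (j + 1) = nthSeq s j := by
  obtain ⟨j, rfl⟩ := Nat.exists_eq_add_of_le' hj
  rfl

lemma sle_nil (t : List ℕ+) : sle [] t :=
  Or.inr ⟨Nat.zero_le _, fun j h1 h2 => by simp at h2; omega⟩

lemma not_sle_nil (a : ℕ+) (s : List ℕ+) : ¬ sle (a :: s) [] := by
  rintro (⟨j, h1, h2, -⟩ | ⟨h, -⟩)
  · simp at h2; omega
  · simp at h

lemma sle_cons (a b : ℕ+) (s t : List ℕ+) :
    sle (a :: s) (b :: t) ↔ a < b ∨ (a = b ∧ sle s t) := by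
  constructor
  · rintro (⟨j, h1, h2, h3, h4⟩ | ⟨h, h'⟩)
    · obtain rfl | hj := h1.eq_or_lt
      · exact Or.inl (by simpa [nthSeq_cons_one] using h4)
      · have hab : a = b := by simpa [nthSeq_cons_one] using h3 1 le_rfl hj
        obtain ⟨j, rfl⟩ := Nat.exists_eq_add_of_le' h1
        have hj' : 1 ≤ j := by omega
        refine Or.inr ⟨hab, Or.inl ⟨j, hj', ?_, fun i hi hij => ?_, ?_⟩⟩
        · simp only [List.length_cons] at h2; omega
        · have := h3 (i + 1) (by omega) (by omega)
          rwa [nthSeq_cons _ _ hi, nthSeq_cons _ _ hi] at this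
        · rwa [nthSeq_cons _ _ hj', nthSeq_cons _ _ hj'] at h4
    · have hab : a = b := by simpa [nthSeq_cons_one] using h' 1 le_rfl (by simp)
      refine Or.inr ⟨hab, Or.inr ⟨by simpa using h, fun j hj hj' => ?_⟩⟩
      have := h' (j + 1) (by omega) (by simpa using hj')
      rwa [nthSeq_cons _ _ hj, nthSeq_cons _ _ hj] at this
  · rintro (h | ⟨rfl, ⟨j, h1, h2, h3, h4⟩ | ⟨h, h'⟩⟩)
    · exact Or.inl ⟨1, le_rfl, by simp, fun i _ _ => by omega, by simpa [nthSeq_cons_one] using h⟩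
    · refine Or.inl ⟨j + 1, by omega, by simp only [List.length_cons]; omega, fun i hi hij => ?_, ?_⟩
      · obtain rfl | hi' := hi.eq_or_lt
        · rfl
        · obtain ⟨i, rfl⟩ := Nat.exists_eq_add_of_le' hi
          rw [nthSeq_cons _ _ (by omega), nthSeq_cons _ _ (by omega)]
          exact h3 i (by omega) (by omega)
      · rwa [nthSeq_cons _ _ h1, nthSeq_cons _ _ h1]
    · refine Or.inr ⟨by simpa using h, fun i hi hij => ?_⟩
      obtain rfl | hi' := hi.eq_or_lt
      · rfl
      · obtain ⟨i, rfl⟩ := Nat.exists_eq_add_of_le' hi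
        rw [nthSeq_cons _ _ (by omega), nthSeq_cons _ _ (by omega)]
        exact h' i (by omega) (by simpa using hij)

/-- The order `≺` is the lexicographic order of Mathlib on lists. -/
theorem slt_iff_lt : ∀ s t : List ℕ+, slt s t ↔ s < t
  | [], [] => by simp [slt]
  | [], b :: t => by simp [slt, sle_nil]
  | a :: s, [] => by simp [slt, not_sle_nil]
  | a :: s, b :: t => by
    have ih := slt_iff_lt s t
    rw [List.cons_lt_cons_iff, ← ih, slt, sle_cons, slt]
    constructor
    · rintro ⟨h | ⟨rfl, h⟩, h'⟩
      · exact Or.inl h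
      · exact Or.inr ⟨rfl, h, fun e => h' (by rw [e])⟩
    · rintro (h | ⟨rfl, h, h'⟩)
      · exact ⟨Or.inl h, fun e => h.ne (List.cons.inj e).1⟩
      · exact ⟨Or.inr ⟨rfl, h⟩, fun e => h' (List.cons.inj e).2⟩

/-- `s + ⟨1⟩` is the immediate successor of `s`. -/
lemma lt_append_one : ∀ t s : List ℕ+, t < s ++ [1] ↔ t < s ∨ t = s
  | [], [] => by simp
  | [], b :: s => by simp
  | a :: t, [] => by simp [List.cons_lt_cons_iff]
  | a :: t, b :: s => by
    have ih := lt_append_one t s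
    rw [List.cons_append, List.cons_lt_cons_iff, List.cons_lt_cons_iff, ih, List.cons.injEq]
    tauto

/-- The finite set of sequences of length `n` with `s i ≤ i` for all `i`. It consists of the elements
of `B` of length `n` when `n ≥ 1`; `Bn 0` holds the empty sequence, which is not in `B`. -/
def Bn : ℕ → Finset (List ℕ+)
  | 0 => {[]}
  | n + 1 => (Bn n ×ˢ Finset.Icc 1 n.succPNat).image fun p => p.1 ++ [p.2]

lemma nthSeq_append_left (s t : List ℕ+) {i : ℕ} (h1 : 1 ≤ i) (hi : i ≤ s.length) :
    nthSeq (s ++ t) i = nthSeq s i := by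
  unfold nthSeq
  rw [List.getD_append _ _ _ _ (by omega)]

lemma nthSeq_append_last (s : List ℕ+) (m : ℕ+) : nthSeq (s ++ [m]) (s.length + 1) = m := by
  unfold nthSeq
  rw [List.getD_append_right _ _ _ _ (by omega)]
  simp

lemma mem_Bn : ∀ (n : ℕ) (s : List ℕ+),
    s ∈ Bn n ↔ s.length = n ∧ ∀ i, 1 ≤ i → i ≤ s.length → nthSeq s i ≤ i
  | 0, s => by
    simp only [Bn, Finset.mem_singleton]
    constructor
    · rintro rfl
      exact ⟨rfl, fun i h1 h2 => by simp at h2; omega⟩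
    · exact fun h => List.length_eq_zero_iff.1 h.1
  | n + 1, s => by
    simp only [Bn, Finset.mem_image, Finset.mem_product, Finset.mem_Icc, Prod.exists]
    constructor
    · rintro ⟨s, m, ⟨hs, -, hm⟩, rfl⟩
      obtain ⟨hl, hs⟩ := (mem_Bn n s).1 hs
      refine ⟨by simp [hl], fun i h1 h2 => ?_⟩
      rw [List.length_append, List.length_singleton] at h2
      obtain h2 | rfl := Nat.le_succ_iff.1 h2
      · rw [nthSeq_append_left _ _ h1 h2]; exact hs i h1 h2
      · rw [Nat.succ_eq_add_one, nthSeq_append_last, hl]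
        exact_mod_cast hm
    · rintro ⟨hl, hs⟩
      obtain rfl | ⟨s, m, rfl⟩ := s.eq_nil_or_concat'
      · simp at hl
      · have hl' : s.length = n := by simpa using hl
        refine ⟨s, m, ⟨(mem_Bn n s).2 ⟨hl', fun i h1 h2 => ?_⟩, one_le, ?_⟩, rfl⟩
        · have := hs i h1 (by simp; omega)
          rwa [nthSeq_append_left _ _ h1 h2] at this
        · have := hs (s.length + 1) (by omega) (by simp)
          rw [nthSeq_append_last, hl'] at this
          exact_mod_cast this

lemma card_Bn : ∀ n, (Bn n).card = n.factorial
  | 0 => rfl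
  | n + 1 => by
    rw [Bn, Finset.card_image_of_injective, Finset.card_product, card_Bn n, PNat.card_Icc,
      Nat.factorial_succ, mul_comm]
    · simp
    · rintro ⟨s, m⟩ ⟨s', m'⟩ h
      have := List.append_inj' h rfl
      simpa using this

lemma lam_pos (n : ℕ) : 0 < lam n := by unfold lam; positivity

lemma BSet_eq : BSet = ⋃ n : ℕ, (Bn (n + 1) : Set (List ℕ+)) := by
  ext s
  simp only [BSet, mem_ofPred_eq, mem_iUnion, Finset.mem_coe, mem_Bn]
  constructor
  · rintro ⟨h, h'⟩
    exact ⟨s.length - 1, by omega, h'⟩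
  · rintro ⟨n, h, hle⟩
    exact ⟨by omega, hle⟩

/-- The intervals have total length `1`: there are `n!` sequences of length `n`, so this is the
geometric series of `2⁻ⁿ` over `n ≥ 1`. -/
theorem tsum_lam : ∑' s : BSet, ENNReal.ofReal (lam s.1.length) = 1 := by
  have h1 : ∑' s : BSet, ENNReal.ofReal (lam s.1.length)
      = ∑' n : ℕ, ∑' s : (Bn (n + 1) : Set (List ℕ+)), ENNReal.ofReal (lam s.1.length) := by
    rw [BSet_eq]
    have := ENNReal.tsum_biUnion (f := fun s : List ℕ+ => ENNReal.ofReal (lam s.length))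
      (t := fun n : ℕ => (Bn (n + 1) : Set (List ℕ+))) (by
        rintro i - j - hij
        refine Set.disjoint_left.2 fun s hs hs' => hij ?_
        have h1 := ((mem_Bn _ _).1 (Finset.mem_coe.1 hs)).1
        have h2 := ((mem_Bn _ _).1 (Finset.mem_coe.1 hs')).1
        omega)
    exact this
  have h2 : ∀ n : ℕ, ∑' s : (Bn (n + 1) : Set (List ℕ+)), ENNReal.ofReal (lam s.1.length)
      = 2⁻¹ ^ (n + 1) := by
    intro n
    have e := Finset.tsum_subtype' (Bn (n + 1)) (fun s : List ℕ+ => ENNReal.ofReal (lam s.length))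
    refine e.trans ?_
    rw [Finset.sum_congr rfl (g := fun _ => ENNReal.ofReal (lam (n + 1)))
      (fun s hs => by rw [((mem_Bn _ _).1 hs).1]), Finset.sum_const, card_Bn, nsmul_eq_mul,
      ← ENNReal.ofReal_natCast, ← ENNReal.ofReal_mul (by positivity)]
    have : ((n + 1).factorial : ℝ) * lam (n + 1) = 2⁻¹ ^ (n + 1) := by
      unfold lam
      rw [inv_pow]
      field_simp
    rw [this, ENNReal.ofReal_pow (by norm_num), ENNReal.ofReal_inv_of_pos (by norm_num)]
    simp
  rw [h1, tsum_congr h2, ENNReal.tsum_geometric_add_one]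
  simp
  exact ENNReal.inv_mul_cancel (by simp) (by simp)

lemma tau_eq (s : List ℕ+) :
    tau s = ∑' t, {t | t ∈ BSet ∧ t < s}.indicator (fun t => lam t.length) t := by
  rw [← tsum_subtype {t | t ∈ BSet ∧ t < s} (fun t => lam t.length)]
  have : {t | t ∈ BSet ∧ t < s} = {t | t ∈ BSet ∧ slt t s} := by
    ext t; simp [slt_iff_lt]
  rw [this]
  rfl

lemma hasSum_B : HasSum (fun s : BSet => lam s.1.length) 1 := by
  have h := ENNReal.hasSum_toReal (f := fun s : BSet => ENNReal.ofReal (lam s.1.length))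
    (by rw [tsum_lam]; simp)
  have e : ∀ s : BSet, (ENNReal.ofReal (lam s.1.length)).toReal = lam s.1.length :=
    fun s => ENNReal.toReal_ofReal (lam_pos _).le
  simp only [e] at h
  have h1 := ENNReal.tsum_toReal_eq (f := fun s : BSet => ENNReal.ofReal (lam s.1.length))
    (fun s => by simp)
  rw [tsum_lam] at h1
  simp only [e, ENNReal.toReal_one] at h1
  rwa [← h1] at h

lemma hasSum_indicator : HasSum (BSet.indicator fun t : List ℕ+ => lam t.length) 1 :=
  (hasSum_subtype_iff_indicator (f := fun t : List ℕ+ => lam t.length) (s := BSet)).1 hasSum_B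

lemma summable_of_subset {A : Set (List ℕ+)} (hA : A ⊆ BSet) :
    Summable (A.indicator fun t => lam t.length) := by
  refine Summable.of_nonneg_of_le (fun t => indicator_nonneg (fun _ _ => (lam_pos _).le) t)
    (fun t => ?_) hasSum_indicator.summable
  exact indicator_le_indicator_of_subset hA (fun _ => (lam_pos _).le) t

lemma sum_mono {A A' : Set (List ℕ+)} (hA : A ⊆ A') (hA' : A' ⊆ BSet) :
    ∑' t, A.indicator (fun t => lam t.length) t ≤ ∑' t, A'.indicator (fun t => lam t.length) t :=
  Summable.tsum_le_tsum (fun t => indicator_le_indicator_of_subset hA (fun _ => (lam_pos _).le) t)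
    (summable_of_subset (hA.trans hA')) (summable_of_subset hA')

lemma tau_nonneg (s : List ℕ+) : 0 ≤ tau s :=
  tsum_nonneg fun _ => (lam_pos _).le

lemma tau_le_one (s : List ℕ+) : tau s ≤ 1 := by
  rw [tau_eq, ← hasSum_indicator.tsum_eq]
  exact sum_mono (fun t h => h.1) subset_rfl

lemma tau_append {s : List ℕ+} (hs : s ∈ BSet) : tau (s ++ [1]) = tau s + lam s.length := by
  have h : {t | t ∈ BSet ∧ t < s ++ [1]} = {t | t ∈ BSet ∧ t < s} ∪ {s} := by
    ext t
    simp only [lt_append_one, mem_ofPred_eq, mem_union, mem_singleton_iff]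
    constructor
    · rintro ⟨h, h' | h'⟩
      · exact Or.inl ⟨h, h'⟩
      · exact Or.inr h'
    · rintro (⟨h, h'⟩ | rfl)
      · exact ⟨h, Or.inl h'⟩
      · exact ⟨hs, Or.inr rfl⟩
  rw [tau_eq, h, indicator_union_of_disjoint (by simp), tau_eq]
  have h2 := summable_of_subset (singleton_subset_iff.2 hs)
  rw [Summable.tsum_add (summable_of_subset fun t h => h.1) h2]
  congr 1
  rw [tsum_eq_single s (fun t ht => indicator_of_notMem (by simpa using ht) _)]
  simp

lemma tau_append_le {s s' : List ℕ+} (hs : s ∈ BSet) (h : s < s') : tau (s ++ [1]) ≤ tau s' := by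
  rw [tau_eq, tau_eq]
  refine sum_mono (fun t ht => ⟨ht.1, ?_⟩) (fun t h => h.1)
  rcases (lt_append_one _ _).1 ht.2 with h' | rfl
  · exact h'.trans h
  · exact h

lemma tau_disjoint {s s' : List ℕ+} (hs : s ∈ BSet) (hs' : s' ∈ BSet) (h : s ≠ s') :
    tau (s ++ [1]) ≤ tau s' ∨ tau (s' ++ [1]) ≤ tau s :=
  (lt_or_gt_of_ne h).imp (tau_append_le hs) (fun h => tau_append_le hs' h)

/-- The intervals `[τ s, τ (s + ⟨1⟩)]` meet every open subinterval of `[0, 1]`: they are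
non-overlapping of total length `1`, so nothing of positive measure is left over. -/
theorem dense {c d : ℝ} (hc : 0 ≤ c) (hcd : c < d) (hd : d ≤ 1) :
    ∃ s ∈ BSet, ∃ t ∈ Ioo c d, t ∈ Icc (tau s) (tau (s ++ [1])) := by
  by_contra! hcon
  let I : BSet → Set ℝ := fun s => Ioo (tau s.1) (tau (s.1 ++ [1]))
  have hd1 : Pairwise (Function.onFun Disjoint I) := by
    intro s s' hne
    rw [Function.onFun, Set.disjoint_left]
    intro x hx hx'
    rcases tau_disjoint s.2 s'.2 (fun e => hne (Subtype.ext e)) with h | h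
    · exact absurd (hx.2.trans_le h) (not_lt.2 hx'.1.le)
    · exact absurd (hx'.2.trans_le h) (not_lt.2 hx.1.le)
  have hv : volume (⋃ s, I s) = 1 := by
    rw [measure_iUnion hd1 fun s => measurableSet_Ioo, ← tsum_lam]
    refine tsum_congr fun s => ?_
    rw [Real.volume_Ioo, tau_append s.2, add_sub_cancel_left]
  have hdis : Disjoint (⋃ s, I s) (Ioo c d) := by
    rw [Set.disjoint_left]
    intro x hx hx'
    obtain ⟨s, hs⟩ := mem_iUnion.1 hx
    exact hcon s.1 s.2 x hx' (Ioo_subset_Icc_self hs)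
  have hsub : (⋃ s, I s) ∪ Ioo c d ⊆ Icc 0 1 := by
    refine union_subset (iUnion_subset fun s x hx => ?_) fun x hx => ?_
    · exact ⟨(tau_nonneg _).trans hx.1.le, hx.2.le.trans (tau_le_one _)⟩
    · exact ⟨hc.trans hx.1.le, hx.2.le.trans hd⟩
  have := measure_mono (μ := volume) hsub
  rw [measure_union hdis measurableSet_Ioo, hv, Real.volume_Ioo, Real.volume_Icc] at this
  have h0 : (0 : ℝ≥0∞) < ENNReal.ofReal (d - c) := by simpa using hcd
  have h1 : (1 : ℝ≥0∞) < 1 + ENNReal.ofReal (d - c) := ENNReal.lt_add_right (by simp) h0.ne'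
  simp only [sub_zero, ENNReal.ofReal_one] at this
  exact absurd this (not_le.2 h1)

end HESeq

/-! ### Two circles of the Hawaiian Earring -/

namespace HEGeom
open Set Topology Filter

lemma mem_Lcirc {n : ℕ} (hn : 1 ≤ n) (z : ℂ) :
    z ∈ Lcirc n ↔ n * Complex.normSq z = 2 * z.re := by
  have h0 : (0 : ℝ) < n := by exact_mod_cast hn
  have h1 : (0 : ℝ) ≤ 1 / n := by positivity
  rw [Lcirc, Metric.mem_sphere, Complex.dist_eq, ← sq_eq_sq₀ (norm_nonneg _) h1,
    ← Complex.normSq_eq_norm_sq, Complex.normSq_apply, Complex.normSq_apply]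
  simp only [Complex.sub_re, Complex.sub_im, Complex.ofReal_re, Complex.ofReal_im, sub_zero]
  have h2 : (n : ℝ) * (1 / n) = 1 := by field_simp
  set q : ℝ := 1 / n
  constructor
  · intro h
    linear_combination n * h - 2 * z.re * h2 + 4 * z.re * h2
  · intro h
    linear_combination q * h - (z.re * z.re + z.im * z.im) * h2

lemma Lcirc_unique {n m : ℕ} (hn : 1 ≤ n) (hm : 1 ≤ m) {z : ℂ} (hz : z ≠ 0)
    (h : z ∈ Lcirc n) (h' : z ∈ Lcirc m) : n = m := by
  rw [mem_Lcirc hn] at h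
  rw [mem_Lcirc hm, ← h] at h'
  exact_mod_cast (mul_right_cancel₀ (Complex.normSq_pos.2 hz).ne' h').symm

lemma mem_HSet {z : ℂ} : z ∈ HSet ↔ ∃ n, 1 ≤ n ∧ z ∈ Lcirc n := by
  simp [HSet]

lemma isOpen_circ {n : ℕ} (hn : 1 ≤ n) : IsOpen {x : HSet | (x : ℂ) ≠ 0 ∧ (x : ℂ) ∈ Lcirc n} := by
  -- `2 re x / |x|²` takes the value `k` on `L_k` away from the origin, and only integer values.
  have e : {x : HSet | (x : ℂ) ≠ 0 ∧ (x : ℂ) ∈ Lcirc n} =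
      {x : HSet | ((n : ℝ) - 1 / 2) * Complex.normSq x < 2 * (x : ℂ).re} ∩
      {x : HSet | 2 * (x : ℂ).re < ((n : ℝ) + 1 / 2) * Complex.normSq x} := by
    ext x
    obtain ⟨k, hk, hxk⟩ := mem_HSet.1 x.2
    have hk' := (mem_Lcirc hk _).1 hxk
    rw [mem_inter_iff, mem_ofPred_eq, mem_ofPred_eq, mem_ofPred_eq]
    constructor
    · rintro ⟨h0, h⟩
      have := Complex.normSq_pos.2 h0
      have h' := (mem_Lcirc hn _).1 h
      constructor <;> nlinarith
    · rintro ⟨h1, h2⟩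
      have h0 : (x : ℂ) ≠ 0 := by
        intro h; rw [h] at h1; simp at h1
      have hp := Complex.normSq_pos.2 h0
      rw [← hk'] at h1 h2
      have h1' := lt_of_mul_lt_mul_right h1 hp.le
      have h2' := lt_of_mul_lt_mul_right h2 hp.le
      have a1 : n < k + 1 := by
        have : (n : ℝ) < k + 1 := by linarith
        exact_mod_cast this
      have a2 : k < n + 1 := by
        have : (k : ℝ) < n + 1 := by linarith
        exact_mod_cast this
      obtain rfl : n = k := by omega
      exact ⟨h0, hxk⟩
  rw [e]
  have c1 : Continuous fun x : HSet => Complex.normSq x :=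
    Complex.continuous_normSq.comp continuous_subtype_val
  have c2 : Continuous fun x : HSet => 2 * (x : ℂ).re :=
    continuous_const.mul (Complex.continuous_re.comp continuous_subtype_val)
  exact (isOpen_lt (continuous_const.mul c1) c2).inter (isOpen_lt c2 (continuous_const.mul c1))

/-- The circles `L_m` and `L_{m+1}` without the origin. -/
def Vset (m : ℕ) : Set HSet :=
  {x | (x : ℂ) ≠ 0 ∧ (x : ℂ) ∈ Lcirc m} ∪ {x | (x : ℂ) ≠ 0 ∧ (x : ℂ) ∈ Lcirc (m + 1)}

/-- The complement of the antipodes `2/m` and `2/(m+1)` of the origin on `L_m` and `L_{m+1}`. -/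
def Uset (m : ℕ) : Set HSet :=
  {x | (x : ℂ) ≠ 2 / (m : ℂ) ∧ (x : ℂ) ≠ 2 / ((m + 1 : ℕ) : ℂ)}

lemma isOpen_V {m : ℕ} (hm : 1 ≤ m) : IsOpen (Vset m) :=
  (isOpen_circ hm).union (isOpen_circ (by omega))

lemma isOpen_U (m : ℕ) : IsOpen (Uset m) :=
  (isOpen_ne_fun continuous_subtype_val continuous_const).inter
    (isOpen_ne_fun continuous_subtype_val continuous_const)

lemma antipode_mem {n : ℕ} (hn : 1 ≤ n) : (2 / (n : ℂ)) ≠ 0 ∧ (2 / (n : ℂ)) ∈ Lcirc n := by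
  have h0 : (n : ℝ) ≠ 0 := by positivity
  have e : (2 / (n : ℂ)) = ((2 / n : ℝ) : ℂ) := by push_cast; rfl
  refine ⟨div_ne_zero two_ne_zero (by exact_mod_cast h0), ?_⟩
  rw [mem_Lcirc hn, e, Complex.normSq_ofReal, Complex.ofReal_re]
  field_simp

lemma mem_U_or_V {m : ℕ} (hm : 1 ≤ m) (x : HSet) : x ∈ Uset m ∨ x ∈ Vset m := by
  by_contra! h
  rcases not_and_or.1 h.1 with h' | h' <;> rw [not_not] at h'
  · exact h.2 (Or.inl (by rw [mem_ofPred_eq, h']; exact antipode_mem hm))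
  · exact h.2 (Or.inr (by rw [mem_ofPred_eq, h']; exact antipode_mem (by omega)))

lemma eq_antipode {n : ℕ} (hn : 1 ≤ n) {z : ℂ} (h0 : z ≠ 0) (hz : z ∈ Lcirc n) (him : z.im = 0) :
    z = 2 / (n : ℂ) := by
  have hn0 : (n : ℝ) ≠ 0 := by positivity
  have e : (2 / (n : ℂ)) = ((2 / n : ℝ) : ℂ) := by push_cast; rfl
  have hre : z.re ≠ 0 := fun h => h0 (Complex.ext h him)
  rw [mem_Lcirc hn, Complex.normSq_apply, him] at hz
  rw [e]
  refine Complex.ext ?_ (by simpa using him)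
  rw [Complex.ofReal_re, eq_div_iff hn0]
  apply mul_right_cancel₀ hre
  linarith

lemma im_ne_zero {m : ℕ} (hm : 1 ≤ m) {x : HSet} (hU : x ∈ Uset m) (hV : x ∈ Vset m) :
    (x : ℂ).im ≠ 0 := by
  intro h
  rcases hV with ⟨h0, h1⟩ | ⟨h0, h1⟩
  · exact hU.1 (eq_antipode hm h0 h1 h)
  · exact hU.2 (eq_antipode (by omega) h0 h1 h)

open Classical in
/-- The transition function on `U ∩ V`, which consists of two open upper and two open lower arcs:
`1` on the upper arcs, `c` on the lower arc of `L_m` and `d` on the lower arc of `L_{m+1}`. -/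
noncomputable def transition {G : Type*} [One G] (m : ℕ) (c d : G) (x : HSet) : G :=
  if 0 < (x : ℂ).im then 1 else if (x : ℂ) ∈ Lcirc m then c else d

lemma trans_loc {G : Type*} [One G] {m : ℕ} (hm : 1 ≤ m) (c d : G) (x : HSet)
    (hx : x ∈ Uset m ∩ Vset m) : ∀ᶠ z in 𝓝 x, transition m c d z = transition m c d x := by
  have hc : Continuous fun x : HSet => (x : ℂ).im :=
    Complex.continuous_im.comp continuous_subtype_val
  rcases (im_ne_zero hm hx.1 hx.2).lt_or_gt with h | h
  · have hev : ∀ᶠ z : HSet in 𝓝 x, (z : ℂ).im < 0 := hc.continuousAt.eventually_lt_const h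
    rcases hx.2 with h' | h'
    · filter_upwards [hev, (isOpen_circ hm).mem_nhds h'] with z h1 h2
      simp [transition, not_lt.2 h1.le, not_lt.2 h.le, h'.2, h2.2]
    · filter_upwards [hev, (isOpen_circ (by omega)).mem_nhds h'] with z h1 h2
      have : ∀ w : HSet, (w : ℂ) ≠ 0 ∧ (w : ℂ) ∈ Lcirc (m + 1) → (w : ℂ) ∉ Lcirc m := by
        intro w hw hw'
        have := Lcirc_unique (by omega) hm hw.1 hw.2 hw'
        omega
      simp [transition, not_lt.2 h1.le, not_lt.2 h.le, this x h', this z h2]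
  · have hev : ∀ᶠ z : HSet in 𝓝 x, 0 < (z : ℂ).im := hc.continuousAt.eventually_const_lt h
    filter_upwards [hev] with z h1
    simp [transition, h1, h]

lemma phi_re (n : ℕ) (r : ℝ) : (phiLoop n r).re = (1 - Real.cos (2 * Real.pi * r)) / n := by
  rw [phiLoop, Complex.add_re, Complex.re_ofReal_mul, Complex.ofReal_re, Complex.I_re]
  ring

lemma phi_im (n : ℕ) (r : ℝ) : (phiLoop n r).im = Real.sin (2 * Real.pi * r) / n := by
  rw [phiLoop, Complex.add_im, Complex.im_ofReal_mul, Complex.ofReal_im, Complex.I_im]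
  ring

lemma phi_mem {n : ℕ} (hn : 1 ≤ n) (r : ℝ) : phiLoop n r ∈ Lcirc n := by
  have hn0 : (n : ℝ) ≠ 0 := by positivity
  rw [mem_Lcirc hn, Complex.normSq_apply, phi_re, phi_im]
  field_simp
  linear_combination Real.sin_sq_add_cos_sq (2 * Real.pi * r)

lemma phi_zero (n : ℕ) : phiLoop n 0 = 0 := by
  apply Complex.ext
  · rw [phi_re]; simp
  · rw [phi_im]; simp

lemma phi_one (n : ℕ) : phiLoop n 1 = 0 := by
  apply Complex.ext
  · rw [phi_re]; simp
  · rw [phi_im]; simp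

variable {m n : ℕ} {r : ℝ} {x : HSet}

lemma phi_mem_V (hm : 1 ≤ m) (hn : n = m ∨ n = m + 1) (hx : (x : ℂ) = phiLoop n r)
    (hr : Real.cos (2 * Real.pi * r) ≤ 0) : x ∈ Vset m := by
  have hn1 : 1 ≤ n := by omega
  have h0 : (x : ℂ) ≠ 0 := by
    intro h
    have := congrArg Complex.re (hx.symm.trans h)
    rw [phi_re, Complex.zero_re, div_eq_zero_iff] at this
    rcases this with h | h
    · linarith
    · have : (n : ℝ) ≠ 0 := by positivity
      exact this h
  have h1 : (x : ℂ) ∈ Lcirc n := hx ▸ phi_mem hn1 r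
  rcases hn with rfl | rfl
  · exact Or.inl ⟨h0, h1⟩
  · exact Or.inr ⟨h0, h1⟩

lemma phi_mem_U (hm : 1 ≤ m) (hn : 1 ≤ n) (hx : (x : ℂ) = phiLoop n r)
    (hr : 0 ≤ Real.cos (2 * Real.pi * r)) : x ∈ Uset m := by
  have key : ∀ k : ℕ, 1 ≤ k → (x : ℂ) ≠ 2 / (k : ℂ) := by
    intro k hk h
    have h1 : (x : ℂ) ∈ Lcirc n := hx ▸ phi_mem hn r
    obtain ⟨h2, h3⟩ := antipode_mem hk
    rw [← h] at h2 h3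
    obtain rfl := Lcirc_unique hn hk h2 h1 h3
    have e : (2 / (n : ℂ)) = ((2 / n : ℝ) : ℂ) := by push_cast; rfl
    have hp : (0 : ℝ) < n := by positivity
    have := congrArg Complex.re (hx.symm.trans h)
    rw [phi_re, e, Complex.ofReal_re, div_left_inj' hp.ne'] at this
    linarith
  exact ⟨key m hm, key (m + 1) (by omega)⟩

lemma cos_outer (h : r ∈ Icc (0 : ℝ) (1 / 4) ∨ r ∈ Icc (3 / 4 : ℝ) 1) :
    0 ≤ Real.cos (2 * Real.pi * r) := by
  have hpi := Real.pi_pos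
  rcases h with ⟨h1, h2⟩ | ⟨h1, h2⟩
  · exact Real.cos_nonneg_of_mem_Icc ⟨by nlinarith, by nlinarith⟩
  · rw [← Real.cos_sub_two_pi]
    exact Real.cos_nonneg_of_mem_Icc ⟨by nlinarith, by nlinarith⟩

lemma cos_inner (h : r ∈ Icc (1 / 4 : ℝ) (3 / 4)) : Real.cos (2 * Real.pi * r) ≤ 0 := by
  have hpi := Real.pi_pos
  exact Real.cos_nonpos_of_pi_div_two_le_of_le (by nlinarith [h.1]) (by nlinarith [h.2])

lemma phi_quarter_im (hn : 1 ≤ n) : 0 < (phiLoop n (1 / 4)).im := by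
  rw [phi_im, show 2 * Real.pi * (1 / 4) = Real.pi / 2 by ring, Real.sin_pi_div_two]
  positivity

lemma phi_three_quarter_im (hn : 1 ≤ n) : (phiLoop n (3 / 4)).im < 0 := by
  rw [phi_im, show 2 * Real.pi * (3 / 4) = Real.pi / 2 + Real.pi by ring, Real.sin_add_pi,
    Real.sin_pi_div_two, neg_div]
  exact neg_lt_zero.2 (by positivity)

section
variable {G : Type*} [Group G] {c d : G} {g : ℝ → HSet} {u v : ℝ → G} {p l : ℝ}

lemma trans_upper (h : 0 < (x : ℂ).im) : transition m c d x = 1 := if_pos h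

lemma trans_lower (hm : 1 ≤ m) (hn : n = m ∨ n = m + 1) (hx : (x : ℂ) ∈ Lcirc n)
    (h : (x : ℂ).im < 0) : transition m c d x = if n = m then c else d := by
  have h0 : (x : ℂ) ≠ 0 := by
    intro h'; rw [h'] at h; simp at h
  rw [transition, if_neg (not_lt.2 h.le)]
  rcases hn with rfl | rfl
  · simp [hx]
  · have : (x : ℂ) ∉ Lcirc m := fun h' => by
      have := Lcirc_unique (by omega) hm h0 hx h'
      omega
    simp [this]

/-- Going once around `L_n`, a path leaves `U` for `V` after a quarter turn and comes back after three
quarters, so the `U`-coordinate changes by the transition functions at these two times. The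
function `θ` stands for the identity or `r ↦ 1 - r`, according to the orientation. -/
lemma circle_aux (hm : 1 ≤ m) (hn : n = m ∨ n = m + 1) (hp : 0 ≤ p) (hl : 0 < l)
    (hpl : p + l ≤ 1)
    (hu : ∀ a b, 0 ≤ a → a ≤ b → b ≤ 1 → (∀ t ∈ Icc a b, g t ∈ Uset m) → u a = u b)
    (hv : ∀ a b, 0 ≤ a → a ≤ b → b ≤ 1 → (∀ t ∈ Icc a b, g t ∈ Vset m) → v a = v b)
    (huv : ∀ t, g t ∈ Uset m ∩ Vset m → v t = transition m c d (g t) * u t) (θ : ℝ → ℝ)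
    (hθ : ∀ r, Real.cos (2 * Real.pi * θ r) = Real.cos (2 * Real.pi * r))
    (hg : ∀ r ∈ Icc (0 : ℝ) 1, (g (p + r * l) : ℂ) = phiLoop n (θ r)) :
    transition m c d (g (p + 3 / 4 * l)) * u (p + l) = transition m c d (g (p + 1 / 4 * l)) * u p := by
  have hn1 : 1 ≤ n := by omega
  have para : ∀ a b, ∀ t ∈ Icc (p + a * l) (p + b * l), ∃ r ∈ Icc a b, t = p + r * l := by
    intro a b t ht
    have e : t = p + (t - p) / l * l := by field_simp; ring
    refine ⟨(t - p) / l, ?_, e⟩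
    rw [e] at ht
    exact ⟨le_of_mul_le_mul_right (by linarith [ht.1]) hl,
      le_of_mul_le_mul_right (by linarith [ht.2]) hl⟩
  have memU : ∀ r ∈ Icc (0 : ℝ) 1, (r ∈ Icc (0 : ℝ) (1 / 4) ∨ r ∈ Icc (3 / 4 : ℝ) 1) →
      g (p + r * l) ∈ Uset m := fun r hr h =>
    phi_mem_U hm hn1 (hg r hr) (by rw [hθ]; exact cos_outer h)
  have memV : ∀ r ∈ Icc (0 : ℝ) 1, r ∈ Icc (1 / 4 : ℝ) (3 / 4) → g (p + r * l) ∈ Vset m :=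
    fun r hr h => phi_mem_V hm hn (hg r hr) (by rw [hθ]; exact cos_inner h)
  have e1 : u (p + 0 * l) = u (p + 1 / 4 * l) := by
    refine hu _ _ (by linarith) (by linarith) (by linarith) fun t ht => ?_
    obtain ⟨r, hr, rfl⟩ := para _ _ t ht
    exact memU r ⟨hr.1, by linarith [hr.2]⟩ (Or.inl hr)
  have e2 : v (p + 1 / 4 * l) = v (p + 3 / 4 * l) := by
    refine hv _ _ (by linarith) (by linarith) (by linarith) fun t ht => ?_
    obtain ⟨r, hr, rfl⟩ := para _ _ t ht
    exact memV r ⟨by linarith [hr.1], by linarith [hr.2]⟩ hr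
  have e3 : u (p + 3 / 4 * l) = u (p + 1 * l) := by
    refine hu _ _ (by linarith) (by linarith) (by linarith) fun t ht => ?_
    obtain ⟨r, hr, rfl⟩ := para _ _ t ht
    exact memU r ⟨by linarith [hr.1], hr.2⟩ (Or.inr hr)
  have q1 := huv (p + 1 / 4 * l) ⟨memU _ (by constructor <;> norm_num)
    (Or.inl (by constructor <;> norm_num)),
    memV _ (by constructor <;> norm_num) (by constructor <;> norm_num)⟩
  have q3 := huv (p + 3 / 4 * l) ⟨memU _ (by constructor <;> norm_num)
    (Or.inr (by constructor <;> norm_num)),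
    memV _ (by constructor <;> norm_num) (by constructor <;> norm_num)⟩
  rw [one_mul] at e3
  rw [zero_mul, add_zero] at e1
  rw [← e3, ← q3, ← e2, q1, e1]

lemma circle_fwd (hm : 1 ≤ m) (hn : n = m ∨ n = m + 1) (hp : 0 ≤ p) (hl : 0 < l)
    (hpl : p + l ≤ 1)
    (hu : ∀ a b, 0 ≤ a → a ≤ b → b ≤ 1 → (∀ t ∈ Icc a b, g t ∈ Uset m) → u a = u b)
    (hv : ∀ a b, 0 ≤ a → a ≤ b → b ≤ 1 → (∀ t ∈ Icc a b, g t ∈ Vset m) → v a = v b)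
    (huv : ∀ t, g t ∈ Uset m ∩ Vset m → v t = transition m c d (g t) * u t)
    (hg : ∀ r ∈ Icc (0 : ℝ) 1, (g (p + r * l) : ℂ) = phiLoop n r) :
    u (p + l) = (if n = m then c else d)⁻¹ * u p := by
  have hn1 : 1 ≤ n := by omega
  have h := circle_aux hm hn hp hl hpl hu hv huv id (fun r => rfl) hg
  have g1 := hg (1 / 4) (by constructor <;> norm_num)
  have g3 := hg (3 / 4) (by constructor <;> norm_num)
  rw [trans_upper (x := g (p + 1 / 4 * l)) (by rw [g1]; exact phi_quarter_im hn1),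
    trans_lower hm hn (x := g (p + 3 / 4 * l)) (by rw [g3]; exact phi_mem hn1 _)
      (by rw [g3]; exact phi_three_quarter_im hn1), one_mul] at h
  rw [← h, inv_mul_cancel_left]

lemma circle_bwd (hm : 1 ≤ m) (hn : n = m ∨ n = m + 1) (hp : 0 ≤ p) (hl : 0 < l)
    (hpl : p + l ≤ 1)
    (hu : ∀ a b, 0 ≤ a → a ≤ b → b ≤ 1 → (∀ t ∈ Icc a b, g t ∈ Uset m) → u a = u b)
    (hv : ∀ a b, 0 ≤ a → a ≤ b → b ≤ 1 → (∀ t ∈ Icc a b, g t ∈ Vset m) → v a = v b)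
    (huv : ∀ t, g t ∈ Uset m ∩ Vset m → v t = transition m c d (g t) * u t)
    (hg : ∀ r ∈ Icc (0 : ℝ) 1, (g (p + r * l) : ℂ) = phiLoop n (1 - r)) :
    u (p + l) = (if n = m then c else d) * u p := by
  have hn1 : 1 ≤ n := by omega
  have h := circle_aux hm hn hp hl hpl hu hv huv (fun r => 1 - r)
    (fun r => by rw [mul_sub, mul_one, Real.cos_two_pi_sub]) hg
  have g1 := hg (1 / 4) (by constructor <;> norm_num)
  have g3 := hg (3 / 4) (by constructor <;> norm_num)
  rw [show (1 - 1 / 4 : ℝ) = 3 / 4 by norm_num] at g1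
  rw [show (1 - 3 / 4 : ℝ) = 1 / 4 by norm_num] at g3
  rw [trans_upper (x := g (p + 3 / 4 * l)) (by rw [g3]; exact phi_quarter_im hn1),
    trans_lower hm hn (x := g (p + 1 / 4 * l)) (by rw [g1]; exact phi_mem hn1 _)
      (by rw [g1]; exact phi_three_quarter_im hn1), one_mul] at h
  exact h

end

section
variable (nseq : ℕ → ℕ) (k : ℕ)

lemma cLoop_arg (lpos : 0 < lam k) (x : ℝ) : 4 * (x * (lam k / 4)) / lam k = x := by
  field_simp

lemma cLoop_first (lpos : 0 < lam k) {r : ℝ} (hr : r ∈ Icc (0 : ℝ) 1) :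
    cLoop nseq k (r * (lam k / 4)) = phiLoop (nseq k) r := by
  simp only [cLoop, cLoop_arg k lpos]
  rw [if_pos hr.2]

lemma cLoop_second (lpos : 0 < lam k) {r : ℝ} (hr : r ∈ Icc (0 : ℝ) 1) :
    cLoop nseq k ((1 + r) * (lam k / 4)) = phiLoop (nseq k + 1) r := by
  simp only [cLoop, cLoop_arg k lpos]
  obtain ⟨h0, h1⟩ := hr
  rcases h0.eq_or_lt with rfl | h0
  · norm_num [phi_zero, phi_one]
  · rw [if_neg (by linarith), if_pos (by linarith), add_sub_cancel_left]

lemma cLoop_third (lpos : 0 < lam k) {r : ℝ} (hr : r ∈ Icc (0 : ℝ) 1) :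
    cLoop nseq k ((2 + r) * (lam k / 4)) = phiLoop (nseq k) (1 - r) := by
  simp only [cLoop, cLoop_arg k lpos]
  obtain ⟨h0, h1⟩ := hr
  rcases h0.eq_or_lt with rfl | h0
  · norm_num [phi_zero, phi_one]
  · rw [if_neg (by linarith), if_neg (by linarith), if_pos (by linarith), add_sub_cancel_left]

lemma cLoop_fourth (lpos : 0 < lam k) {r : ℝ} (hr : r ∈ Icc (0 : ℝ) 1) :
    cLoop nseq k ((3 + r) * (lam k / 4)) = phiLoop (nseq k + 1) (1 - r) := by
  simp only [cLoop, cLoop_arg k lpos]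
  obtain ⟨h0, h1⟩ := hr
  rcases h0.eq_or_lt with rfl | h0
  · norm_num [phi_zero, phi_one]
  · rw [if_neg (by linarith), if_neg (by linarith), if_neg (by linarith), add_sub_cancel_left]

end

lemma cLoop_mem {nseq : ℕ → ℕ} {k : ℕ} (hk : 1 ≤ nseq k) (t : ℝ) :
    cLoop nseq k t ∈ Lcirc (nseq k) ∨ cLoop nseq k t ∈ Lcirc (nseq k + 1) := by
  simp only [cLoop]
  split_ifs
  · exact Or.inl (phi_mem hk _)
  · exact Or.inr (phi_mem (by omega) _)
  · exact Or.inl (phi_mem hk _)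
  · exact Or.inr (phi_mem (by omega) _)

/-- Across a copy of `c_k` the `U`-coordinate is multiplied by the commutator of `d` and `c`. -/
lemma commutator_step {G : Type*} [Group G] {c d : G} {g : ℝ → HSet} {u v : ℝ → G} {p : ℝ}
    {nseq : ℕ → ℕ} {k : ℕ} (lpos : 0 < lam k) (hm : 1 ≤ nseq k) (hp : 0 ≤ p)
    (hpl : p + lam k ≤ 1)
    (hu : ∀ a b, 0 ≤ a → a ≤ b → b ≤ 1 → (∀ t ∈ Icc a b, g t ∈ Uset (nseq k)) → u a = u b)
    (hv : ∀ a b, 0 ≤ a → a ≤ b → b ≤ 1 → (∀ t ∈ Icc a b, g t ∈ Vset (nseq k)) → v a = v b)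
    (huv : ∀ t, g t ∈ Uset (nseq k) ∩ Vset (nseq k) → v t = transition (nseq k) c d (g t) * u t)
    (hg : ∀ t ∈ Icc p (p + lam k), (g t : ℂ) = cLoop nseq k (t - p)) :
    u (p + lam k) = d * c * d⁻¹ * c⁻¹ * u p := by
  have hg' : ∀ x ∈ Icc (0 : ℝ) 4, (g (p + x * (lam k / 4)) : ℂ) =
      cLoop nseq k (x * (lam k / 4)) := by
    intro x hx
    rw [hg _ ⟨by have := hx.1; nlinarith, by have := hx.2; nlinarith⟩, add_sub_cancel_left]
  set l := lam k / 4 with hl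
  have l0 : 0 < l := by positivity
  have l4 : lam k = 4 * l := by rw [hl]; ring
  have s1 := circle_fwd (p := p) (l := l) hm (Or.inl rfl) hp l0 (by linarith) hu hv huv
    (fun r hr => by
      rw [hg' _ ⟨hr.1, by linarith [hr.2]⟩, cLoop_first nseq k lpos hr])
  have s2 := circle_fwd (p := p + l) (l := l) hm (Or.inr rfl) (by linarith) l0 (by linarith)
    hu hv huv
    (fun r hr => by
      rw [← cLoop_second nseq k lpos hr, ← hg' _ ⟨by linarith [hr.1], by linarith [hr.2]⟩]
      congr 2; ring)
  have s3 := circle_bwd (p := p + l + l) (l := l) hm (Or.inl rfl) (by linarith) l0 (by linarith)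
    hu hv huv
    (fun r hr => by
      rw [← cLoop_third nseq k lpos hr, ← hg' _ ⟨by linarith [hr.1], by linarith [hr.2]⟩]
      congr 2; ring)
  have s4 := circle_bwd (p := p + l + l + l) (l := l) hm (Or.inr rfl) (by linarith) l0 (by linarith)
    hu hv huv
    (fun r hr => by
      rw [← cLoop_fourth nseq k lpos hr, ← hg' _ ⟨by linarith [hr.1], by linarith [hr.2]⟩]
      congr 2; ring)
  rw [if_pos rfl] at s1 s3
  rw [if_neg (by omega)] at s2 s4
  rw [show p + lam k = p + l + l + l + l by rw [l4]; ring, s4, s3, s2, s1]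
  group
section Separation

lemma nseq_sep {nseq : ℕ → ℕ} (hsep : ∀ k, 1 ≤ k → nseq k + 1 < nseq (k + 1)) {j k : ℕ}
    (hj : 1 ≤ j) (hjk : j < k) : nseq j + 1 < nseq k := by
  induction k, hjk using Nat.le_induction with
  | base => exact hsep j hj
  | succ k h ih =>
    have := hsep k (by have := Nat.lt_of_succ_le h; omega)
    omega

lemma cLoop_not_mem_V {nseq : ℕ → ℕ} (hpos : ∀ k, 1 ≤ k → 1 ≤ nseq k)
    (hsep : ∀ k, 1 ≤ k → nseq k + 1 < nseq (k + 1)) {j k : ℕ} (hj : 1 ≤ j) (hk : 1 ≤ k)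
    (hjk : j ≠ k) {x : HSet} {t : ℝ} (hx : (x : ℂ) = cLoop nseq j t) : x ∉ Vset (nseq k) := by
  have h1 := hpos j hj
  have h2 := hpos k hk
  have h3 : nseq j + 1 < nseq k ∨ nseq k + 1 < nseq j :=
    (lt_or_gt_of_ne hjk).imp (nseq_sep hsep hj) (nseq_sep hsep hk)
  have key : ∀ a, (a = nseq k ∨ a = nseq k + 1) → ¬ ((x : ℂ) ≠ 0 ∧ (x : ℂ) ∈ Lcirc a) := by
    rintro a ha ⟨h0, hxa⟩
    rcases cLoop_mem h1 t with h | h <;> rw [← hx] at h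
    · have := Lcirc_unique h1 (by omega) h0 h hxa
      omega
    · have := Lcirc_unique (by omega) (by omega) h0 h hxa
      omega
  rintro (h | h)
  · exact key _ (Or.inl rfl) h
  · exact key _ (Or.inr rfl) h

lemma cLoop_zero (nseq : ℕ → ℕ) (k : ℕ) : cLoop nseq k 0 = 0 := by
  simp [cLoop, phi_zero]

lemma cLoop_lam (nseq : ℕ → ℕ) (k : ℕ) (lpos : 0 < lam k) : cLoop nseq k (lam k) = 0 := by
  have h := cLoop_fourth nseq k lpos (r := 1) (by simp)
  rw [sub_self, phi_zero] at h
  rw [← h]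
  congr 1; ring

/-- Outside the copies of `c_k` the loop avoids `V`. If it entered the open set `V` at such a time,
it would stay there during an interval, which by density meets a copy of some `c_j` with `j ≠ k`;
but that loop runs in two other circles. -/
theorem not_mem_V_off {nseq : ℕ → ℕ} (hpos : ∀ k, 1 ≤ k → 1 ≤ nseq k)
    (hsep : ∀ k, 1 ≤ k → nseq k + 1 < nseq (k + 1)) {g : ℝ → HSet} (hg : Continuous g)
    (hval : ∀ s ∈ BSet, ∀ t ∈ Icc (tau s) (tau (s ++ [1])),
      (g t : ℂ) = cLoop nseq s.length (t - tau s)) {k : ℕ} (hk : 1 ≤ k) {t : ℝ}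
    (ht : t ∈ Icc (0 : ℝ) 1) (h0 : (g 0 : ℂ) = 0) (h1 : (g 1 : ℂ) = 0)
    (hoff : ∀ s ∈ HESeq.Bn k, t ∉ Ioo (tau s) (tau (s ++ [1]))) : g t ∉ Vset (nseq k) := by
  intro hV
  have hne : (g t : ℂ) ≠ 0 := by
    rcases hV with h | h
    · exact h.1
    · exact h.1
  have hBn : ∀ s ∈ HESeq.Bn k, s ∈ BSet ∧ s.length = k := by
    intro s hs
    obtain ⟨hl, h⟩ := (HESeq.mem_Bn k s).1 hs
    exact ⟨⟨by omega, h⟩, hl⟩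
  have ht0 : 0 < t := ht.1.lt_of_ne (by rintro rfl; exact hne h0)
  have ht1 : t < 1 := ht.2.lt_of_ne (by rintro rfl; exact hne h1)
  have hIcc : ∀ s ∈ HESeq.Bn k, t ∉ Icc (tau s) (tau (s ++ [1])) := by
    intro s hs hts
    obtain ⟨hB, hl⟩ := hBn s hs
    have hv := hval s hB t hts
    have ha := HESeq.tau_append hB
    rcases hts.1.eq_or_lt with e | e
    · rw [e, sub_self, cLoop_zero] at hv
      exact hne hv
    · rcases hts.2.eq_or_lt with e' | e'
      · rw [e', ha, add_sub_cancel_left, cLoop_lam _ _ (HESeq.lam_pos _), ← ha, ← e'] at hv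
        exact hne hv
      · exact hoff s hs ⟨e, e'⟩
  have hev : ∀ᶠ x in 𝓝 t, g x ∈ Vset (nseq k) ∧ x ∈ Ioo (0 : ℝ) 1 ∧
      ∀ s ∈ HESeq.Bn k, x ∉ Icc (tau s) (tau (s ++ [1])) := by
    have h01 : ∀ᶠ x in 𝓝 t, x ∈ Ioo (0 : ℝ) 1 := Ioo_mem_nhds ht0 ht1
    refine (hg.continuousAt.eventually_mem ((isOpen_V (hpos k hk)).mem_nhds hV)).and (h01.and ?_)
    rw [Filter.eventually_all_finset]
    exact fun s hs => isClosed_Icc.isOpen_compl.mem_nhds (hIcc s hs)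
  obtain ⟨a, b, htab, hab⟩ := mem_nhds_iff_exists_Ioo_subset.1 hev
  obtain ⟨s, hs, x, hx, hxs⟩ := HESeq.dense (c := max a 0) (d := min b 1) (le_max_right _ _)
    (by rw [max_lt_iff, lt_min_iff, lt_min_iff]
        exact ⟨⟨htab.1.trans htab.2, htab.1.trans ht1⟩, ht0.trans htab.2, one_pos⟩)
    (min_le_right _ _)
  obtain ⟨hxV, -, hxn⟩ := hab ⟨(le_max_left _ _).trans_lt hx.1, hx.2.trans_le (min_le_left _ _)⟩
  have hsk : s.length ≠ k := by
    intro e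
    exact hxn s ((HESeq.mem_Bn k s).2 ⟨e, hs.2⟩) hxs
  exact cLoop_not_mem_V hpos hsep hs.1 hk hsk (hval s hs x hxs) hxV

end Separation

end HEGeom

/-- The homotopy class of the loop `σ_1` (a loop in `ℍ` based at `(0,0)`) does not lie in
the commutator subgroup of the fundamental group `π₁(ℍ, (0,0))`. -/
theorem sigma_one_not_mem_commutator (nseq : ℕ → ℕ)
    (hpos : ∀ k, 1 ≤ k → 1 ≤ nseq k)
    (hlamseq : ∀ k, 1 ≤ k → 8 * Real.pi / (nseq k : ℝ) ≤ lam k)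
    (hsep : ∀ k, 1 ≤ k → nseq k + 1 < nseq (k + 1))
    (σ₁ : ℝ → ℂ)
    (hmem : ∀ t ∈ Set.Icc (0 : ℝ) 1, σ₁ t ∈ HSet)
    (hlip : ∀ t ∈ Set.Icc (0 : ℝ) 1, ∀ t' ∈ Set.Icc (0 : ℝ) 1,
      HEdist (σ₁ t) (σ₁ t') ≤ |t - t'|)
    (hval : ∀ s ∈ BSet, ∀ t ∈ Set.Icc (tau s) (tau (s ++ [1])),
      σ₁ t = cLoop nseq s.length (t - tau s))
    (γ : Path (⟨0, zero_mem_HSet⟩ : HSet) (⟨0, zero_mem_HSet⟩ : HSet))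
    (hγ : ∀ t : unitInterval, (γ t : ℂ) = σ₁ (t : ℝ)) :
    FundamentalGroup.fromPath (X := TopCat.of ↥HSet) (x := ⟨0, zero_mem_HSet⟩) ⟦γ⟧ ∉
      commutator (FundamentalGroup (TopCat.of ↥HSet) ⟨0, zero_mem_HSet⟩) := by
  intro hcomm
  obtain ⟨C, hC⟩ := HECover.commutator_bound
    (Γ := FundamentalGroup HSet ⟨0, zero_mem_HSet⟩)
    (z := FundamentalGroup.fromPath ⟦γ⟧) hcomm
  obtain ⟨d, c, hdc⟩ := HECover.exists_pair
  -- `k > C`, so that `k!`, the number of copies of `c_k` in `σ₁`, exceeds `C`.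
  obtain ⟨N, hN⟩ := exists_nat_gt C
  set k := N + 1 with hk
  have hk1 : 1 ≤ k := by omega
  have hm := hpos k hk1
  obtain ⟨Φ, hΦ⟩ := HECover.exists_hom (HEGeom.Uset (nseq k)) (HEGeom.Vset (nseq k))
    (HEGeom.isOpen_U _) (HEGeom.isOpen_V hm) (HEGeom.mem_U_or_V hm)
    (HEGeom.transition (nseq k) c d) (HEGeom.trans_loc hm c d) ⟨0, zero_mem_HSet⟩
    (HEGeom.phi_mem_U (n := 1) (r := 0) hm le_rfl (HEGeom.phi_zero 1).symm (by simp))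
  obtain ⟨u, v, hu0, hu1, hu, hv, huv⟩ := hΦ γ
  have hext : ∀ t ∈ Set.Icc (0 : ℝ) 1, (γ.extend t : ℂ) = σ₁ t := by
    intro t ht
    rw [γ.extend_apply ht]
    exact hγ ⟨t, ht⟩
  have hval' : ∀ s ∈ BSet, ∀ t ∈ Set.Icc (tau s) (tau (s ++ [1])),
      (γ.extend t : ℂ) = cLoop nseq s.length (t - tau s) := by
    intro s hs t ht
    rw [hext t ⟨(HESeq.tau_nonneg s).trans ht.1, ht.2.trans (HESeq.tau_le_one _)⟩]
    exact hval s hs t ht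
  have hBn : ∀ s ∈ HESeq.Bn k, s ∈ BSet ∧ s.length = k := by
    intro s hs
    obtain ⟨hl, h⟩ := (HESeq.mem_Bn k s).1 hs
    exact ⟨⟨by omega, h⟩, hl⟩
  have hfin := HECover.steps tau (fun s => tau (s ++ [1])) (d * c * d⁻¹ * c⁻¹) u (HESeq.Bn k)
    (fun s hs => ⟨HESeq.tau_nonneg s, by
      rw [HESeq.tau_append (hBn s hs).1]
      have := HESeq.lam_pos s.length
      linarith⟩)
    (fun s hs t ht hst => HESeq.tau_disjoint (hBn s hs).1 (hBn t ht).1 hst)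
    (fun s hs => by
      obtain ⟨hB, hl⟩ := hBn s hs
      have ha := HESeq.tau_append hB
      have hle := HESeq.tau_le_one (s ++ [1])
      have hv' := hval' s hB
      rw [hl] at ha hv'
      rw [ha] at hle hv'
      simp only [ha]
      exact HEGeom.commutator_step (HESeq.lam_pos k) hm (HESeq.tau_nonneg s) hle hu hv huv hv')
    1 zero_le_one (fun s _ => HESeq.tau_le_one _)
    (fun x y hx hxy hy hoff => hu x y hx hxy hy fun t ht =>
      (HEGeom.mem_U_or_V hm _).resolve_right
        (HEGeom.not_mem_V_off hpos hsep γ.continuous_extend hval' hk1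
          ⟨hx.trans ht.1, ht.2.trans hy⟩ (by simp) (by simp) fun s hs hts => by
            rcases hoff s hs with h | h
            · exact absurd (hts.2.trans_le h) (not_lt.2 ht.1)
            · exact absurd (h.trans_lt hts.1) (not_lt.2 ht.2)))
  have hb := hC Φ
  rw [← hu1, hfin, hu0, mul_one, HESeq.card_Bn, hdc] at hb
  have h1 : (k : ℝ) ≤ k.factorial := by exact_mod_cast Nat.self_le_factorial k
  have h2 : (k : ℝ) = N + 1 := by rw [hk]; push_cast; rfl
  have h3 := le_abs_self (k.factorial : ℝ)
  linarith
end
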